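/- Let Σ be a subshift of quasi-finite type. The Artin–Mazur zeta function ζ(z) = exp( Σ_{n≥1} (zⁿ/n) · #{x ∈ Σ : σⁿx = x} ) defines a holomorphic function on the disk |z| < e^{−h_top(Σ)} and extends to a meromorphic function on the disk |z| < e^{−h_{𝒮𝒞}(Σ)}. -/

import Mathlib

open Filter Set MeasureTheory

namespace QFTPaper

variable {A : Type*} {B : Type*}

/-- The left shift on bi-infinite sequences over the alphabet `A`. -/
def shift (x : ℤ → A) : ℤ → A := fun n => x (n + 1)

/-- A subshift: a closed, shift-invariant subset of `A^ℤ`. -/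
def IsSubshift [TopologicalSpace A] (X : Set (ℤ → A)) : Prop :=
  IsClosed X ∧ shift '' X = X

/-- The finite word `w` occurs in `x` at position `k`. -/
def OccursAt (w : List A) (x : ℤ → A) (k : ℤ) : Prop :=
  ∀ i : Fin w.length, x (k + (i : ℕ)) = w.get i

/-- The language of `X`: words of length `n` occurring in elements of `X`
(at position `0`, which is no restriction by shift-invariance). -/
def Lang (X : Set (ℤ → A)) (n : ℕ) : Set (List A) :=
  { w | w.length = n ∧ ∃ x ∈ X, OccursAt w x 0 }

/-- Topological entropy of a subshift. -/
noncomputable def hTop (X : Set (ℤ → A)) : ℝ :=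
  limsup (fun n : ℕ => Real.log (Nat.card ↥(Lang X n)) / (n : ℝ)) atTop

/-- Follower set of the finite word `w = A₋ₙ…A₀` (listed from `A₋ₙ` to `A₀`):
the set of one-sided sequences `B₀B₁B₂…` with `B ∈ X` and `B₋ₙ…B₀ = A₋ₙ…A₀`,
realized by requiring `w` to occur in `B` at positions `0,…,n` and reading off
the tail of `B` starting at the position of the last letter of `w`.
For the empty word this gives `X₊` (by shift-invariance). -/
def fol (X : Set (ℤ → A)) (w : List A) : Set (ℕ → A) :=
  { y | ∃ B ∈ X, (∀ i : Fin w.length, B ((i : ℕ) : ℤ) = w.get i) ∧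
        ∀ k : ℕ, y k = B ((w.length : ℤ) - 1 + (k : ℤ)) }

/-- `w = A₋ₙ…A₀` is a left constraint:
`∅ ≠ fol(A₋ₙ…A₀) ⊊ fol(A₋ₙ₊₁…A₀)`. -/
def IsLeftConstraint (X : Set (ℤ → A)) (w : List A) : Prop :=
  w ≠ [] ∧ fol X w ≠ ∅ ∧ fol X w ⊂ fol X w.tail

/-- `𝒞(X, n)`: the set of left constraints of length `n`. -/
def LC (X : Set (ℤ → A)) (n : ℕ) : Set (List A) :=
  { w | w.length = n ∧ IsLeftConstraint X w }

/-- The left constraint entropy `h_𝒞(X) = limsup (1/n) log⁺ #𝒞(X,n)`. -/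
noncomputable def hC (X : Set (ℤ → A)) : ℝ :=
  limsup (fun n : ℕ => max 0 (Real.log (Nat.card ↥(LC X n))) / (n : ℝ)) atTop

/-- The time-reversed subshift `X̄`. -/
def rev (X : Set (ℤ → A)) : Set (ℤ → A) :=
  (fun x : ℤ → A => fun n : ℤ => x (-n)) '' X

/-- The symmetric constraint entropy `h_𝒮𝒞(X) = min (h_𝒞(X), h_𝒞(X̄))`. -/
noncomputable def hSC (X : Set (ℤ → A)) : ℝ := min (hC X) (hC (rev X))

/-- Subshift of quasi-finite type: `h_𝒮𝒞(X) < h_top(X)`. -/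
def IsQFT [TopologicalSpace A] (X : Set (ℤ → A)) : Prop :=
  IsSubshift X ∧ hSC X < hTop X

/-- The word `B₋ₘ…B₀` read off from a one-sided past `b` (where `b j = B₋ⱼ`). -/
def wordOf (b : ℕ → A) (m : ℕ) : List A :=
  (List.range (m + 1)).map fun j => b (m - j)

/-- An extendable left constraint: a left constraint `A₋ₙ…A₀` which admits a
one-sided past `B` extending it such that `B₋ₘ…B₀` is again a left constraint
for infinitely many `m`. -/
def IsExtendable (X : Set (ℤ → A)) (w : List A) : Prop :=
  IsLeftConstraint X w ∧
  ∃ b : ℕ → A, wordOf b (w.length - 1) = w ∧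
    ∀ N : ℕ, ∃ m, N ≤ m ∧ IsLeftConstraint X (wordOf b m)

/-- `𝒞*(X, n)`: the set of extendable left constraints of length `n`. -/
def ELC (X : Set (ℤ → A)) (n : ℕ) : Set (List A) :=
  { w | w.length = n ∧ IsExtendable X w }

/-- The extendable left constraint entropy `h*_𝒞(X)`. -/
noncomputable def hCstar (X : Set (ℤ → A)) : ℝ :=
  limsup (fun n : ℕ => Real.log (Nat.card ↥(ELC X n)) / (n : ℝ)) atTop

/-- `h*_𝒮𝒞(X) = min (h*_𝒞(X), h*_𝒞(X̄))`. -/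
noncomputable def hSCstar (X : Set (ℤ → A)) : ℝ := min (hCstar X) (hCstar (rev X))

/-- Subshift of weak quasi-finite type: `h*_𝒮𝒞(X) < h_top(X)`. -/
def IsWeakQFT [TopologicalSpace A] (X : Set (ℤ → A)) : Prop :=
  IsSubshift X ∧ hSCstar X < hTop X

/-- Subshift of finite type: defined by excluding a finite set of finite words. -/
def IsSFT (X : Set (ℤ → A)) : Prop :=
  ∃ F : Finset (List A), X = { x | ∀ w ∈ F, ∀ k : ℤ, ¬ OccursAt w x k }

/-- Sofic subshift: the image of an SFT under a continuous shift-commuting map. -/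
def IsSofic [TopologicalSpace A] (X : Set (ℤ → A)) : Prop :=
  ∃ (B : Type) (_ : Fintype B) (Y : Set (ℤ → B)) (π : (ℤ → B) → (ℤ → A)),
    IsSFT Y ∧
    (letI : TopologicalSpace B := ⊥
     Continuous π) ∧
    (∀ x : ℤ → B, π (shift x) = shift (π x)) ∧ π '' Y = X


/-- Topological conjugacy of subshifts: a homeomorphism commuting with the shifts. -/
def Conjugate [TopologicalSpace A] [TopologicalSpace B]
    (X : Set (ℤ → A)) (Y : Set (ℤ → B)) : Prop :=
  ∃ φ : X ≃ₜ Y, ∀ x x' : X, (x' : ℤ → A) = shift (x : ℤ → A) →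
    (φ x' : ℤ → B) = shift (φ x : ℤ → B)

/-- The cylinder of a word of length `n` placed at positions `0,…,n-1`. -/
def cylSet (n : ℕ) (w : Fin n → A) : Set (ℤ → A) :=
  { x | ∀ i : Fin n, x ((i : ℕ) : ℤ) = w i }

/-- Entropy of the partition of `A^ℤ` into cylinders of length `n`. -/
noncomputable def blockEntropy [Fintype A] [MeasurableSpace A]
    (μ : Measure (ℤ → A)) (n : ℕ) : ℝ :=
  ∑ w : Fin n → A, Real.negMulLog ((μ (cylSet n w)).toReal)

/-- Kolmogorov–Sinai entropy of a shift-invariant measure on `A^ℤ`,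
computed with the natural (generating) partition into cylinders. -/
noncomputable def KSEntropy [Fintype A] [MeasurableSpace A]
    (μ : Measure (ℤ → A)) : ℝ :=
  ⨅ n : ℕ, blockEntropy μ (n + 1) / (n + 1)

/-- A maximum measure: an ergodic shift-invariant Borel probability measure
carried by `X` whose Kolmogorov–Sinai entropy equals the topological entropy of `X`. -/
def IsMaxMeasure [Fintype A] [MeasurableSpace A]
    (X : Set (ℤ → A)) (μ : Measure (ℤ → A)) : Prop :=
  IsProbabilityMeasure μ ∧ μ Xᶜ = 0 ∧ Ergodic shift μ ∧ KSEntropy μ = hTop X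

/-- The number of points of `X` fixed by the `n`-th power of the shift. -/
noncomputable def perCount (X : Set (ℤ → A)) (n : ℕ) : ℕ :=
  Nat.card {x : ℤ → A | x ∈ X ∧ shift^[n] x = x}

/-!
Read a point of `X` from left to right and remember only the shortest suffix of the past that
determines the possible futures. These suffixes are the states of a deterministic automaton; apart
from the empty word they are left constraints, so their number grows at the rate `h_𝒞 X`. A loop
of the automaton determines a periodic point, and every periodic point comes from exactly one loop
unless it remembers more than `N` letters at all times.

Finitely many states remember at most `N` letters. Eliminating the others by a Schur complement
turns the part of `ζ` counting loops through these finitely many states into `1 / det (1 - R(z))`,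
where the entries of the finite matrix `R(z)` are generating functions of excursions through the
states of memory greater than `N`. Excursions, and periodic points of memory always greater than
`N`, can be tiled by left constraints longer than `N`. For large `N` there are only `O(ρⁿ)` such
tilings of length `n`, for any `ρ > exp h_𝒞`, so `R` and the remaining factor of `ζ` are
holomorphic on disks of radius close to `exp (-h_𝒞)`. Time reversal preserves `ζ` and exchanges the
two constraint entropies.
-/

section PowerSeries

open Asymptotics Topology

variable {a b : ℕ → ℂ} {ρ : ℝ} {z : ℂ}

theorem summable_mul_pow (hρ : 0 ≤ ρ) (ha : a =O[atTop] (ρ ^ · : ℕ → ℝ)) (hz : ‖z‖ * ρ < 1) :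
    Summable fun n => a n * z ^ n := by
  refine summable_of_isBigO_nat (g := fun n => (‖z‖ * ρ) ^ n)
    (summable_geometric_of_lt_one (by positivity) hz) ?_
  refine (ha.mul (isBigO_refl (fun n => z ^ n) atTop).norm_right).congr_right fun n => ?_
  rw [norm_pow, mul_pow, mul_comm]

theorem differentiableOn_tsum_mul_pow (hρ : 0 < ρ) (ha : a =O[atTop] (ρ ^ · : ℕ → ℝ)) :
    DifferentiableOn ℂ (fun z => ∑' n, a n * z ^ n) (Metric.ball 0 ρ⁻¹) := by
  intro z hz
  obtain ⟨r, hzr, hr⟩ := exists_between (mem_ball_zero_iff.1 hz)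
  have hr₀ : 0 < r := (norm_nonneg z).trans_lt hzr
  have hrρ : ‖(r : ℂ)‖ * ρ < 1 := by
    rwa [Complex.norm_of_nonneg hr₀.le, ← lt_div_iff₀ hρ, one_div]
  have hdiff : DifferentiableOn ℂ (fun z => ∑' n, a n * z ^ n) (Metric.ball 0 r) :=
    Complex.differentiableOn_tsum_of_summable_norm (u := fun n => ‖a n * (r : ℂ) ^ n‖)
      (summable_mul_pow hρ.le ha hrρ).norm (fun n => by fun_prop) Metric.isOpen_ball
      fun n w hw => by
        rw [norm_mul, norm_mul, norm_pow, norm_pow, Complex.norm_of_nonneg hr₀.le]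
        gcongr
        exact (mem_ball_zero_iff.1 hw).le
  exact (hdiff.differentiableAt
    (Metric.isOpen_ball.mem_nhds (mem_ball_zero_iff.2 hzr))).differentiableWithinAt

/-- The logarithm `∑_{n ≥ 1} aₙ zⁿ / n` of the zeta function of the sequence `a`, whose value
at `0` plays no role. -/
noncomputable def logZeta (a : ℕ → ℂ) (z : ℂ) : ℂ :=
  ∑' n : ℕ, a (n + 1) / (n + 1) * z ^ (n + 1)

theorem one_le_norm_natCast_add_one (n : ℕ) : 1 ≤ ‖(n : ℂ) + 1‖ := by
  rw [← Nat.cast_succ, Complex.norm_natCast]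
  exact_mod_cast n.succ_pos

theorem isBigO_succ (ha : a =O[atTop] (ρ ^ · : ℕ → ℝ)) :
    (fun n => a (n + 1)) =O[atTop] (ρ ^ · : ℕ → ℝ) := by
  have hshift : (fun n => a (n + 1)) =O[atTop] fun n => ρ ^ (n + 1) :=
    ha.comp_tendsto (tendsto_add_atTop_nat 1)
  refine hshift.trans ?_
  simp only [pow_succ']
  exact isBigO_const_mul_self ρ _ _

theorem isBigO_logZeta_coeff (ha : a =O[atTop] (ρ ^ · : ℕ → ℝ)) :
    (fun n : ℕ => a (n + 1) / (n + 1)) =O[atTop] (ρ ^ · : ℕ → ℝ) := by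
  refine (isBigO_of_le _ fun n => ?_ :
    (fun n : ℕ => a (n + 1) / (n + 1)) =O[atTop] fun n => a (n + 1)).trans (isBigO_succ ha)
  rw [norm_div]
  exact div_le_self (norm_nonneg _) (one_le_norm_natCast_add_one n)

theorem summable_logZeta (hρ : 0 ≤ ρ) (ha : a =O[atTop] (ρ ^ · : ℕ → ℝ)) (hz : ‖z‖ * ρ < 1) :
    Summable fun n : ℕ => a (n + 1) / (n + 1) * z ^ (n + 1) := by
  simpa only [pow_succ, mul_assoc] using
    (summable_mul_pow hρ (isBigO_logZeta_coeff ha) hz).mul_right z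

theorem logZeta_add (hρ : 0 ≤ ρ) (ha : a =O[atTop] (ρ ^ · : ℕ → ℝ))
    (hb : b =O[atTop] (ρ ^ · : ℕ → ℝ)) (hz : ‖z‖ * ρ < 1) :
    logZeta (a + b) z = logZeta a z + logZeta b z := by
  simp only [logZeta, Pi.add_apply, add_div, add_mul]
  exact (summable_logZeta hρ ha hz).tsum_add (summable_logZeta hρ hb hz)

theorem exists_lt_and_mul_lt_one {x : ℝ} (hx : x * ρ < 1) : ∃ r, x < r ∧ r * ρ < 1 := by
  have hlim : Tendsto (fun r : ℝ => r * ρ) (𝓝[>] x) (𝓝 (x * ρ)) :=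
    ((continuous_mul_const ρ).tendsto _).mono_left nhdsWithin_le_nhds
  exact (eventually_mem_nhdsWithin.and (hlim.eventually_lt_const hx)).exists

theorem hasDerivAt_logZeta (hρ : 0 ≤ ρ) (ha : a =O[atTop] (ρ ^ · : ℕ → ℝ)) (hz : ‖z‖ * ρ < 1) :
    HasDerivAt (logZeta a) (∑' n, a (n + 1) * z ^ n) z := by
  obtain ⟨r, hzr, hrρ⟩ := exists_lt_and_mul_lt_one hz
  have hr : ‖(r : ℂ)‖ = r := Complex.norm_of_nonneg ((norm_nonneg z).trans hzr.le)
  refine hasDerivAt_tsum_of_isPreconnected (u := fun n => ‖a (n + 1) * (r : ℂ) ^ n‖)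
    (g := fun n w => a (n + 1) / (n + 1) * w ^ (n + 1)) (g' := fun n w => a (n + 1) * w ^ n)
    (summable_mul_pow hρ (isBigO_succ ha) (by rwa [hr])).norm Metric.isOpen_ball
    (convex_ball (0 : ℂ) r).isPreconnected (fun n w _ => ?_) (fun n w hw => ?_)
    (Metric.mem_ball_self ((norm_nonneg z).trans_lt hzr)) ?_ (mem_ball_zero_iff.2 hzr)
  · have hn : (n : ℂ) + 1 ≠ 0 := Nat.cast_add_one_ne_zero n
    refine ((hasDerivAt_pow (n + 1) w).const_mul (a (n + 1) / ((n : ℂ) + 1))).congr_deriv ?_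
    push_cast
    field_simp
  · rw [norm_mul, norm_mul, norm_pow, norm_pow, hr]
    gcongr
    exact (mem_ball_zero_iff.1 hw).le
  · simp [summable_zero]

theorem differentiableOn_logZeta (hρ : 0 < ρ) (ha : a =O[atTop] (ρ ^ · : ℕ → ℝ)) :
    DifferentiableOn ℂ (logZeta a) (Metric.ball 0 ρ⁻¹) := fun z hz => by
  rw [mem_ball_zero_iff, ← one_div, lt_div_iff₀ hρ] at hz
  exact (hasDerivAt_logZeta hρ.le ha hz).differentiableAt.differentiableWithinAt

theorem tendsto_logZeta {α : Type*} {l : Filter α} {f : α → ℕ → ℂ} {C : ℝ}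
    (hρ : 0 ≤ ρ) (hlim : ∀ n, Tendsto (f · (n + 1)) l (𝓝 (a (n + 1))))
    (hf : ∀ s n, ‖f s n‖ ≤ C * ρ ^ n) (hz : ‖z‖ * ρ < 1) :
    Tendsto (fun s => logZeta (f s) z) l (𝓝 (logZeta a z)) := by
  refine tendsto_tsum_of_dominated_convergence (bound := fun n => C * (‖z‖ * ρ) ^ (n + 1))
    (((summable_nat_add_iff 1).2 (summable_geometric_of_lt_one (by positivity) hz)).mul_left C)
    (fun n => ((hlim n).div_const _).mul_const _) (.of_forall fun s n => ?_)
  rw [norm_mul, norm_div, norm_pow]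
  calc ‖f s (n + 1)‖ / ‖(n : ℂ) + 1‖ * ‖z‖ ^ (n + 1)
      ≤ C * ρ ^ (n + 1) * ‖z‖ ^ (n + 1) := by
        gcongr
        exact (div_le_self (norm_nonneg _) (one_le_norm_natCast_add_one n)).trans (hf s _)
    _ = C * (‖z‖ * ρ) ^ (n + 1) := by ring

end PowerSeries

section Determinant

open Asymptotics Matrix Topology

theorem differentiableOn_det {𝕜 n : Type*} [NontriviallyNormedField 𝕜] [Fintype n]
    [DecidableEq n] {M : 𝕜 → Matrix n n 𝕜} {s : Set 𝕜}
    (hM : ∀ i j, DifferentiableOn 𝕜 (fun x => M x i j) s) :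
    DifferentiableOn 𝕜 (fun x => (M x).det) s := by
  simp only [Matrix.det_apply]
  exact .fun_sum fun σ _ => .const_smul (.fun_finsetProd fun i _ => hM (σ i) i) _

attribute [local instance] Matrix.linftyOpNormedRing Matrix.linftyOpNormedAddCommGroup
  Matrix.linftyOpNormedSpace Matrix.linftyOpNormedAlgebra

variable {ι κ : Type*} [Fintype ι] [Fintype κ]

theorem linfty_opNorm_le_of_row_sum_le {M : Matrix ι κ ℂ} {q : ℝ} (hq : 0 ≤ q)
    (hM : ∀ i, ∑ j, ‖M i j‖ ≤ q) : ‖M‖ ≤ q := by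
  lift q to NNReal using hq
  rw [linfty_opNorm_def]
  exact_mod_cast Finset.sup_le fun i _ => by
    rw [← NNReal.coe_le_coe]
    simpa using hM i

theorem norm_entry_le_linfty_opNorm (M : Matrix ι κ ℂ) (i : ι) (j : κ) : ‖M i j‖ ≤ ‖M‖ := by
  rw [linfty_opNorm_def]
  have hrow : ‖M i j‖₊ ≤ ∑ j, ‖M i j‖₊ :=
    Finset.single_le_sum (f := fun j => ‖M i j‖₊) (fun _ _ => zero_le) (Finset.mem_univ j)
  exact_mod_cast hrow.trans
    (Finset.le_sup (f := fun i => ∑ j, ‖M i j‖₊) (Finset.mem_univ i))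

theorem norm_smul_lt_one {M : Matrix ι κ ℂ} {z : ℂ} (hz : ‖z‖ * ‖M‖ < 1) : ‖z • M‖ < 1 :=
  (norm_smul_le z M).trans_lt hz

variable [DecidableEq ι] [DecidableEq κ]

theorem isBigO_trace_pow (M : Matrix ι ι ℂ) :
    (fun n => (M ^ n).trace) =O[atTop] (‖M‖ ^ · : ℕ → ℝ) := by
  refine .of_bound (Fintype.card ι) ((eventually_gt_atTop 0).mono fun n hn => ?_)
  rw [norm_pow, norm_norm]
  calc ‖(M ^ n).trace‖ ≤ ∑ i, ‖(M ^ n) i i‖ := norm_sum_le _ _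
    _ ≤ ∑ _i : ι, ‖M‖ ^ n := Finset.sum_le_sum fun i _ =>
        (norm_entry_le_linfty_opNorm _ i i).trans (norm_pow_le' M hn)
    _ = Fintype.card ι * ‖M‖ ^ n := by simp

theorem one_sub_mul_inv {M : Matrix ι ι ℂ} (hM : ‖M‖ < 1) : (1 - M) * (1 - M)⁻¹ = 1 := by
  rw [inv_eq_right_inv (mul_neg_geom_series M hM), mul_neg_geom_series M hM]

theorem hasSum_pow_inv {M : Matrix ι ι ℂ} (hM : ‖M‖ < 1) :
    HasSum (fun n => M ^ n) (1 - M)⁻¹ := by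
  rw [inv_eq_right_inv (mul_neg_geom_series M hM)]
  exact (summable_geometric_of_norm_lt_one hM).hasSum

theorem hasDerivAt_det_one_add_smul (M : Matrix ι ι ℂ) :
    HasDerivAt (fun w : ℂ => (1 + w • M).det) M.trace 0 := by
  have hpoly := ((1 + (Polynomial.X : Polynomial ℂ) • M.map Polynomial.C).det).hasDerivAt 0
  rw [derivative_det_one_add_X_smul] at hpoly
  refine hpoly.congr_of_eventuallyEq (.of_forall fun w => ?_)
  beta_reduce
  rw [← Polynomial.coe_evalRingHom, RingHom.map_det]
  congr 1
  ext i j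
  rcases eq_or_ne i j with hij | hij <;> simp [one_apply, hij] <;> ring

theorem hasDerivAt_det_one_sub_smul {M : Matrix ι ι ℂ} {z : ℂ} (hz : ‖z • M‖ < 1) :
    HasDerivAt (fun w : ℂ => (1 - w • M).det)
      (-(1 - z • M).det * ((1 - z • M)⁻¹ * M).trace) z := by
  set N := (1 - z • M)⁻¹ * M
  have hfactor : (fun w : ℂ => (1 - w • M).det) =
      fun w => (1 - z • M).det * (1 + (w - z) • -N).det := by
    funext w
    rw [← det_mul, mul_add, mul_one, mul_smul_comm, mul_neg, ← mul_assoc, one_sub_mul_inv hz,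
      one_mul, smul_neg, sub_smul]
    congr 1
    abel
  have hsub : HasDerivAt (fun w : ℂ => w - z) 1 z := (hasDerivAt_id z).sub_const z
  have hdet : HasDerivAt (fun w : ℂ => (1 + w • -N).det) (-N).trace (z - z) := by
    simpa only [sub_self] using hasDerivAt_det_one_add_smul (-N)
  rw [hfactor]
  refine ((hdet.comp (h := (· - z)) z hsub).const_mul _).congr_deriv ?_
  rw [trace_neg]
  ring

theorem hasSum_trace_pow_mul_pow {M : Matrix ι ι ℂ} {z : ℂ} (hz : ‖z • M‖ < 1) :
    HasSum (fun n => (M ^ (n + 1)).trace * z ^ n) ((1 - z • M)⁻¹ * M).trace := by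
  let L : Matrix ι ι ℂ →ₗ[ℂ] ℂ := traceLinearMap ι ℂ ℂ ∘ₗ LinearMap.mulRight ℂ M
  refine ((hasSum_pow_inv hz).map L (LinearMap.continuous_of_finiteDimensional L)).congr_fun
    fun n => ?_
  simp [L, smul_pow, pow_succ, mul_comm]

theorem hasDerivAt_exp_logZeta_trace_mul_det (M : Matrix ι ι ℂ) {z : ℂ} (hz : ‖z‖ * ‖M‖ < 1) :
    HasDerivAt (fun w => Complex.exp (logZeta (fun n => (M ^ n).trace) w) * (1 - w • M).det)
      0 z := by
  have hzM := norm_smul_lt_one hz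
  have hlog := hasDerivAt_logZeta (norm_nonneg M) (isBigO_trace_pow M) hz
  refine (hlog.cexp.mul (hasDerivAt_det_one_sub_smul hzM)).congr_deriv ?_
  rw [(hasSum_trace_pow_mul_pow hzM).tsum_eq]
  ring

theorem exp_logZeta_trace_mul_det (M : Matrix ι ι ℂ) {z : ℂ} (hz : ‖z‖ * ‖M‖ < 1) :
    Complex.exp (logZeta (fun n => (M ^ n).trace) z) * (1 - z • M).det = 1 := by
  obtain ⟨r, hzr, hr⟩ := exists_lt_and_mul_lt_one hz
  have hderiv : ∀ w ∈ Metric.ball (0 : ℂ) r, HasDerivAt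
      (fun w => Complex.exp (logZeta (fun n => (M ^ n).trace) w) * (1 - w • M).det) 0 w :=
    fun w hw => hasDerivAt_exp_logZeta_trace_mul_det M <|
      (mul_le_mul_of_nonneg_right (mem_ball_zero_iff.1 hw).le (norm_nonneg M)).trans_lt hr
  have hconst := Metric.isOpen_ball.is_const_of_deriv_eq_zero
    (convex_ball (0 : ℂ) r).isPreconnected
    (fun w hw => (hderiv w hw).differentiableAt.differentiableWithinAt)
    (fun w hw => (hderiv w hw).deriv) (mem_ball_zero_iff.2 hzr)
    (Metric.mem_ball_self ((norm_nonneg z).trans_lt hzr))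
  exact hconst.trans (by simp [logZeta])

theorem hasSum_mul_pow_mul {m n : Type*} (P : Matrix m κ ℂ) (D : Matrix κ κ ℂ) (Q : Matrix κ n ℂ)
    {z : ℂ} (hz : ‖z • D‖ < 1) (i : m) (j : n) :
    HasSum (fun n => (P * D ^ n * Q) i j * z ^ n) ((P * (1 - z • D)⁻¹ * Q) i j) := by
  let L : Matrix κ κ ℂ →ₗ[ℂ] ℂ :=
    { toFun := fun Y => (P * Y * Q) i j
      map_add' := fun Y Y' => by simp [Matrix.mul_add, Matrix.add_mul]
      map_smul' := fun c Y => by simp }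
  refine ((hasSum_pow_inv hz).map L (LinearMap.continuous_of_finiteDimensional L)).congr_fun
    fun n => ?_
  simp [L, smul_pow, mul_comm]

theorem exp_logZeta_trace_fromBlocks_mul_det (P : Matrix ι ι ℂ) (Q : Matrix ι κ ℂ)
    (R : Matrix κ ι ℂ) (D : Matrix κ κ ℂ) {z : ℂ} (hM : ‖z‖ * ‖fromBlocks P Q R D‖ < 1)
    (hD : ‖z‖ * ‖D‖ < 1) :
    Complex.exp (logZeta (fun n => (fromBlocks P Q R D ^ n).trace) z) *
      (1 - (z • P + z ^ 2 • (Q * (1 - z • D)⁻¹ * R))).det =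
    Complex.exp (logZeta (fun n => (D ^ n).trace) z) := by
  have hinv := one_sub_mul_inv (norm_smul_lt_one hD)
  let _ : Invertible (1 - z • D) := invertibleOfRightInverse _ _ hinv
  have hblocks : 1 - z • fromBlocks P Q R D =
      fromBlocks (1 - z • P) (-(z • Q)) (-(z • R)) (1 - z • D) := by
    rw [fromBlocks_smul, ← fromBlocks_one, sub_eq_add_neg, fromBlocks_neg, fromBlocks_add]
    simp [sub_eq_add_neg]
  have hschur : 1 - z • P - -(z • Q) * ⅟(1 - z • D) * -(z • R) =
      1 - (z • P + z ^ 2 • (Q * (1 - z • D)⁻¹ * R)) := by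
    rw [invOf_eq_nonsing_inv]
    simp [sub_sub, smul_smul, pow_two]
  have hdetM := exp_logZeta_trace_mul_det _ hM
  have hdetD := exp_logZeta_trace_mul_det _ hD
  rw [hblocks, det_fromBlocks₂₂, hschur] at hdetM
  have hne : (1 - z • D).det ≠ 0 := right_ne_zero_of_mul_eq_one hdetD
  refine mul_right_cancel₀ hne ?_
  linear_combination hdetM - hdetD

end Determinant

section MeromorphicExtension

open Topology

theorem meromorphicNFOn_eqOn_of_isPreconnected {f g : ℂ → ℂ} {U : Set ℂ} {z₀ : ℂ}
    (hU : IsPreconnected U) (hz₀ : z₀ ∈ U) (hf : MeromorphicNFOn f U) (hg : MeromorphicNFOn g U)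
    (hfg : f =ᶠ[𝓝[≠] z₀] g) : EqOn f g U := by
  intro z hz
  have hsub : MeromorphicOn (f - g) U := hf.meromorphicOn.sub hg.meromorphicOn
  have hzero : meromorphicOrderAt (f - g) z₀ = ⊤ :=
    meromorphicOrderAt_eq_top_iff.2 (hfg.mono fun w hw => by simp [hw])
  have horder : meromorphicOrderAt (f - g) z = ⊤ := by
    by_contra hne
    exact hsub.meromorphicOrderAt_ne_top_of_isPreconnected hU hz hz₀ hne hzero
  have hz' : f =ᶠ[𝓝[≠] z] g :=
    (meromorphicOrderAt_eq_top_iff.1 horder).mono fun w hw => sub_eq_zero.1 hw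
  exact (((hf hz).eventuallyEq_nhdsNE_iff_eventuallyEq_nhds (hg hz)).1 hz').eq_of_nhds

theorem exists_meromorphicNFOn_ball {f : ℂ → ℂ} {R : ℝ} (hR : 0 < R)
    (hext : ∀ r ∈ Ioo 0 R, ∃ g : ℂ → ℂ,
      MeromorphicNFOn g (Metric.ball 0 r) ∧ g =ᶠ[𝓝[≠] 0] f) :
    ∃ g : ℂ → ℂ, MeromorphicNFOn g (Metric.ball 0 R) ∧ g =ᶠ[𝓝[≠] 0] f := by
  choose! G hGmer hGf using hext
  have hmono : ∀ r ∈ Ioo 0 R, ∀ s ∈ Ioo 0 R, r ≤ s → EqOn (G r) (G s) (Metric.ball 0 r) :=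
    fun r hr s hs hrs => meromorphicNFOn_eqOn_of_isPreconnected
      (convex_ball (0 : ℂ) r).isPreconnected (Metric.mem_ball_self hr.1) (hGmer r hr)
      (fun w hw => hGmer s hs (Metric.ball_subset_ball hrs hw)) ((hGf r hr).trans (hGf s hs).symm)
  let radius (w : ℂ) : ℝ := (‖w‖ + R) / 2
  have hradius : ∀ w : ℂ, ‖w‖ < R → radius w ∈ Ioo 0 R ∧ ‖w‖ < radius w := fun w hw => by
    have := norm_nonneg w
    refine ⟨⟨?_, ?_⟩, ?_⟩ <;> simp only [radius] <;> linarith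
  have hglue : ∀ r ∈ Ioo 0 R, EqOn (fun w => G (radius w) w) (G r) (Metric.ball 0 r) := by
    intro r hr w hw
    have hw' := mem_ball_zero_iff.1 hw
    obtain ⟨hs, hws⟩ := hradius w (hw'.trans hr.2)
    rcases le_total r (radius w) with hle | hle
    · exact (hmono r hr _ hs hle hw).symm
    · exact hmono _ hs r hr hle (mem_ball_zero_iff.2 hws)
  have hnhds : ∀ r ∈ Ioo 0 R, ∀ z ∈ Metric.ball (0 : ℂ) r,
      (fun w => G (radius w) w) =ᶠ[𝓝 z] G r := fun r hr z hz =>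
    (hglue r hr).eventuallyEq_of_mem (Metric.isOpen_ball.mem_nhds hz)
  refine ⟨fun w => G (radius w) w, fun z hz => ?_, ?_⟩
  · obtain ⟨hs, hzs⟩ := hradius z (mem_ball_zero_iff.1 hz)
    rw [meromorphicNFAt_congr (hnhds _ hs z (mem_ball_zero_iff.2 hzs))]
    exact hGmer _ hs (mem_ball_zero_iff.2 hzs)
  · have hs : R / 2 ∈ Ioo 0 R := ⟨by linarith, by linarith⟩
    exact ((hnhds _ hs 0 (Metric.mem_ball_self hs.1)).filter_mono nhdsWithin_le_nhds).trans
      (hGf _ hs)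

theorem exists_meromorphicOn_ball_eqOn {f : ℂ → ℂ} {r₀ R : ℝ} (hr₀ : 0 < r₀) (hR : r₀ ≤ R)
    (hf : DifferentiableOn ℂ f (Metric.ball 0 r₀))
    (hext : ∀ r ∈ Ioo 0 R, ∃ g : ℂ → ℂ,
      MeromorphicOn g (Metric.ball 0 r) ∧ g =ᶠ[𝓝[≠] 0] f) :
    ∃ g : ℂ → ℂ, MeromorphicOn g (Metric.ball 0 R) ∧ EqOn g f (Metric.ball 0 r₀) := by
  obtain ⟨g, hg, hgf⟩ := exists_meromorphicNFOn_ball (hr₀.trans_le hR) fun r hr => by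
    obtain ⟨g, hg, hgf⟩ := hext r hr
    exact ⟨toMeromorphicNFOn g (Metric.ball 0 r), meromorphicNFOn_toMeromorphicNFOn _ _,
      (hg.toMeromorphicNFOn_eq_self_on_nhdsNE (Metric.mem_ball_self hr.1)).trans hgf⟩
  have hfNF : MeromorphicNFOn f (Metric.ball 0 r₀) := fun z hz =>
    (hf.analyticAt (Metric.isOpen_ball.mem_nhds hz)).meromorphicNFAt
  exact ⟨g, hg.meromorphicOn, meromorphicNFOn_eqOn_of_isPreconnected
    (convex_ball (0 : ℂ) r₀).isPreconnected (Metric.mem_ball_self hr₀)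
    (fun z hz => hg (Metric.ball_subset_ball hR hz)) hfNF hgf⟩

end MeromorphicExtension

section WordCounting

open Asymptotics Computability Topology

/-- The number of words of length `n` in a language. -/
noncomputable def wordCount (L : Language A) (n : ℕ) : ℕ :=
  {w | w.length = n ∧ w ∈ L}.ncard

variable {L M : Language A}

theorem finite_words [Finite A] (L : Language A) (n : ℕ) : {w | w.length = n ∧ w ∈ L}.Finite :=
  (List.finite_length_eq A n).subset fun _ hw => hw.1

theorem wordCount_congr {n : ℕ} (h : ∀ w : List A, w.length = n → (w ∈ L ↔ w ∈ M)) :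
    wordCount L n = wordCount M n :=
  congrArg ncard (Set.ext fun w => and_congr_right (h w))

theorem wordCount_eq_zero {n : ℕ} (h : ∀ w : List A, w.length = n → w ∉ L) : wordCount L n = 0 :=
  (congrArg ncard (eq_empty_of_forall_notMem fun w hw => h w hw.1 hw.2)).trans (ncard_empty _)

theorem wordCount_mono [Finite A] {n : ℕ} (h : ∀ w : List A, w.length = n → w ∈ L → w ∈ M) :
    wordCount L n ≤ wordCount M n :=
  ncard_le_ncard (fun w hw => ⟨hw.1, h w hw.1 hw.2⟩) (finite_words M n)

theorem wordCount_le_pow [Finite A] (L : Language A) (n : ℕ) : wordCount L n ≤ Nat.card A ^ n := by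
  have := Fintype.ofFinite A
  calc wordCount L n ≤ {w : List A | w.length = n}.ncard :=
        ncard_le_ncard (fun _ hw => hw.1) (List.finite_length_eq A n)
    _ = Nat.card (List.Vector A n) := (Nat.card_coe_set_eq _).symm
    _ = Nat.card A ^ n := by simp [Nat.card_eq_fintype_card]

theorem wordCount_add_le (L M : Language A) (n : ℕ) :
    wordCount (L + M) n ≤ wordCount L n + wordCount M n := by
  have hunion : {w | w.length = n ∧ w ∈ L + M} =
      {w | w.length = n ∧ w ∈ L} ∪ {w | w.length = n ∧ w ∈ M} := by
    ext w
    simp only [Language.mem_add, mem_union, mem_ofPred_eq, and_or_left]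
  rw [wordCount, hunion]
  exact ncard_union_le _ _

theorem wordCount_sdiff_add [Finite A] (h : M ≤ L) (n : ℕ) :
    wordCount (L \ M) n + wordCount M n = wordCount L n := by
  have hdiff : {w | w.length = n ∧ w ∈ L \ M} =
      {w | w.length = n ∧ w ∈ L} \ {w | w.length = n ∧ w ∈ M} :=
    Set.ext fun w => ⟨fun hw => ⟨⟨hw.1, hw.2.1⟩, fun hM => hw.2.2 hM.2⟩,
      fun hw => ⟨hw.1.1, hw.1.2, fun hM => hw.2 ⟨hw.1.1, hM⟩⟩⟩
  rw [wordCount, hdiff]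
  exact ncard_sdiff_add_ncard_of_subset (fun w hw => ⟨hw.1, h hw.2⟩) (finite_words L n)

theorem wordCount_succ [Fintype A] (L : Language A) (n : ℕ) :
    wordCount L (n + 1) = ∑ c, wordCount (L.leftQuotient [c]) n := by
  have hunion : {w | w.length = n + 1 ∧ w ∈ L} =
      ⋃ c, (c :: ·) '' {w | w.length = n ∧ w ∈ L.leftQuotient [c]} := by
    ext w
    rw [mem_iUnion]
    constructor
    · rintro ⟨hlen, hw⟩
      obtain ⟨c, w, rfl⟩ := List.exists_cons_of_length_eq_add_one hlen
      exact ⟨c, w, ⟨Nat.succ_injective hlen, hw⟩, rfl⟩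
    · rintro ⟨c, w, ⟨hlen, hw⟩, rfl⟩
      exact ⟨congrArg Nat.succ hlen, hw⟩
  have hdisj : Pairwise (Function.onFun Disjoint fun c =>
      (c :: ·) '' {w | w.length = n ∧ w ∈ L.leftQuotient [c]}) := by
    refine fun c d hcd => disjoint_left.2 ?_
    rintro _ ⟨v, -, rfl⟩ ⟨w, -, hvw⟩
    exact hcd (List.cons.inj hvw).1.symm
  rw [wordCount, hunion,
    ncard_iUnion_of_finite (fun c => (finite_words _ n).image _) hdisj, finsum_eq_sum_of_fintype]
  exact Finset.sum_congr rfl fun c _ => ncard_image_of_injective _ List.cons_injective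

theorem eventually_wordCount_eq [Finite A] {α : Type*} {l : Filter α} {F : α → Language A}
    (h : ∀ w, ∀ᶠ s in l, (w ∈ F s ↔ w ∈ L)) (n : ℕ) :
    ∀ᶠ s in l, wordCount (F s) n = wordCount L n :=
  ((eventually_all_finite (List.finite_length_eq A n)).2 fun w _ => h w).mono
    fun _ hs => wordCount_congr hs

theorem isBigO_wordCount [Finite A] (L : Language A) :
    (fun n => (wordCount L n : ℂ)) =O[atTop] ((Nat.card A : ℝ) ^ · : ℕ → ℝ) :=
  .of_bound 1 (.of_forall fun n => by
    simpa using mod_cast wordCount_le_pow L n)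

theorem logZeta_wordCount_sdiff_add [Finite A] (h : M ≤ L) {z : ℂ} (hz : ‖z‖ * Nat.card A < 1) :
    logZeta (fun n => wordCount (L \ M) n) z + logZeta (fun n => wordCount M n) z =
      logZeta (fun n => wordCount L n) z := by
  rw [← logZeta_add (Nat.cast_nonneg _) (isBigO_wordCount _) (isBigO_wordCount _) hz]
  refine congrArg (logZeta · z) (funext fun n => ?_)
  rw [Pi.add_apply]
  exact_mod_cast wordCount_sdiff_add h n

theorem wordCount_mul_le [Finite A] (L M : Language A) (n : ℕ) :
    wordCount (L * M) n ≤ ∑ i ∈ Finset.range (n + 1), wordCount L i * wordCount M (n - i) := by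
  let P (i : ℕ) : Set (List A × List A) :=
    {w | w.length = i ∧ w ∈ L} ×ˢ {w | w.length = n - i ∧ w ∈ M}
  have hfin (i : ℕ) : (P i).Finite := (finite_words L i).prod (finite_words M (n - i))
  have hsub : {w | w.length = n ∧ w ∈ L * M} ⊆
      ⋃ i ∈ Finset.range (n + 1), (fun q => q.1 ++ q.2) '' P i := by
    rintro w ⟨hlen, u, hu, v, hv, rfl⟩
    beta_reduce at hlen
    rw [List.length_append] at hlen
    exact mem_iUnion₂.2 ⟨u.length, Finset.mem_range.2 (by omega), (u, v),
      ⟨⟨rfl, hu⟩, by dsimp only; omega, hv⟩, rfl⟩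
  calc wordCount (L * M) n
      ≤ (⋃ i ∈ Finset.range (n + 1), (fun q => q.1 ++ q.2) '' P i).ncard :=
        ncard_le_ncard hsub ((Finset.finite_toSet _).biUnion fun i _ => (hfin i).image _)
    _ ≤ ∑ i ∈ Finset.range (n + 1), ((fun q => q.1 ++ q.2) '' P i).ncard :=
        Finset.set_ncard_biUnion_le _ _
    _ ≤ ∑ i ∈ Finset.range (n + 1), wordCount L i * wordCount M (n - i) :=
        Finset.sum_le_sum fun i _ => (ncard_image_le (hfin i)).trans_eq ncard_prod

theorem wordCount_kstar_mul_le [Finite A] {C ρ : ℝ} (hρ : 0 < ρ) (hL₀ : wordCount L 0 = 0)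
    (hL : ∀ n, ∑ i ∈ Finset.range n, wordCount L i / ρ ^ i ≤ 1 / 2)
    (hM : ∀ n, wordCount M n ≤ C * ρ ^ n) (n : ℕ) :
    wordCount (L∗ * M) n ≤ 2 * C * ρ ^ n := by
  have hC : 0 ≤ C := by simpa using (Nat.cast_nonneg (α := ℝ) _).trans (hM 0)
  have hrec : L∗ * M = M + L * (L∗ * M) := by
    conv_lhs => rw [← Language.one_add_self_mul_kstar_eq_kstar, one_add_mul, mul_assoc]
  induction n using Nat.strong_induction_on with
  | _ n ih =>
    have hterm : ∀ i ∈ Finset.range (n + 1),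
        (wordCount L i * wordCount (L∗ * M) (n - i) : ℝ) ≤
          2 * C * ρ ^ n * (wordCount L i / ρ ^ i) := by
      intro i hi
      have hin : i ≤ n := Finset.mem_range_succ_iff.1 hi
      rcases Nat.eq_zero_or_pos i with rfl | hpos
      · simp [hL₀]
      · calc (wordCount L i * wordCount (L∗ * M) (n - i) : ℝ)
            ≤ wordCount L i * (2 * C * ρ ^ (n - i)) := by gcongr; exact ih _ (by omega)
          _ = 2 * C * ρ ^ n * (wordCount L i / ρ ^ i) := by
              rw [← Nat.sub_add_cancel hin, pow_add, Nat.add_sub_cancel]; field_simp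
    calc (wordCount (L∗ * M) n : ℝ) ≤ wordCount M n +
          ∑ i ∈ Finset.range (n + 1), (wordCount L i * wordCount (L∗ * M) (n - i) : ℝ) := by
          conv_lhs => rw [hrec]
          exact_mod_cast (wordCount_add_le _ _ n).trans (by gcongr; exact wordCount_mul_le _ _ n)
      _ ≤ C * ρ ^ n + ∑ i ∈ Finset.range (n + 1), 2 * C * ρ ^ n * (wordCount L i / ρ ^ i) :=
          add_le_add (hM n) (Finset.sum_le_sum hterm)
      _ ≤ C * ρ ^ n + 2 * C * ρ ^ n * (1 / 2) := by
          rw [← Finset.mul_sum]; gcongr; exact hL _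
      _ = 2 * C * ρ ^ n := by ring

theorem exists_sum_Ioc_le {f : ℕ → ℝ} (hf : Summable f) {ε : ℝ} (hε : 0 < ε) :
    ∃ N, ∀ n, ∑ i ∈ Finset.Ioc N n, f i ≤ ε := by
  obtain ⟨s, hs⟩ := summable_iff_vanishing_norm.1 hf ε hε
  refine ⟨s.sup id, fun n => (le_abs_self _).trans (hs _ ?_).le⟩
  exact Finset.disjoint_left.2 fun i hi his =>
    (Finset.mem_Ioc.1 hi).1.not_ge (Finset.le_sup (f := id) his)

/-- The words of `L` of length greater than `N`. -/
def longWords (L : Language A) (N : ℕ) : Language A := {w | w ∈ L ∧ N < w.length}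

theorem exists_isBigO_wordCount_kstar_mul [Finite A] {ρ₀ ρ : ℝ} (hρ₀ : 0 < ρ₀) (hρ : ρ₀ < ρ)
    (hL : (fun n => (wordCount L n : ℝ)) =O[atTop] (ρ₀ ^ · : ℕ → ℝ))
    (hM : (fun n => (wordCount M n : ℝ)) =O[atTop] (ρ ^ · : ℕ → ℝ)) :
    ∃ N, (fun n => (wordCount ((longWords L N)∗ * M) n : ℝ)) =O[atTop] (ρ ^ · : ℕ → ℝ) := by
  have hρpos := hρ₀.trans hρ
  have hsummable : Summable fun n => (wordCount L n / ρ ^ n : ℝ) := by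
    refine summable_of_isBigO_nat (g := fun n => (ρ₀ / ρ) ^ n)
      (summable_geometric_of_lt_one (by positivity) ((div_lt_one hρpos).2 hρ)) ?_
    simpa only [div_pow, ← div_eq_mul_inv] using hL.mul (isBigO_refl (fun n => (ρ ^ n)⁻¹) atTop)
  obtain ⟨N, hN⟩ := exists_sum_Ioc_le hsummable one_half_pos
  obtain ⟨C, -, hC⟩ := bound_of_isBigO_nat_atTop hM
  have hshort : ∀ i ≤ N, wordCount (longWords L N) i = 0 := fun i hi =>
    wordCount_eq_zero fun w hlen hw => (hlen.trans_le hi).not_gt hw.2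
  have hlong (n : ℕ) :
      ∑ i ∈ Finset.range n, (wordCount (longWords L N) i / ρ ^ i : ℝ) ≤ 1 / 2 := by
    calc ∑ i ∈ Finset.range n, (wordCount (longWords L N) i / ρ ^ i : ℝ)
        ≤ ∑ i ∈ Finset.Ioc N n, (wordCount (longWords L N) i / ρ ^ i : ℝ) := by
          rw [← Finset.sum_filter_ne_zero]
          refine Finset.sum_le_sum_of_subset_of_nonneg (fun i hi => ?_) fun i _ _ => by positivity
          obtain ⟨hin, hne⟩ := Finset.mem_filter.1 hi
          exact Finset.mem_Ioc.2 ⟨not_le.1 fun hle => hne (by simp [hshort i hle]),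
            (Finset.mem_range.1 hin).le⟩
      _ ≤ ∑ i ∈ Finset.Ioc N n, (wordCount L i / ρ ^ i : ℝ) := by
          gcongr with i
          exact wordCount_mono fun w _ hw => hw.1
      _ ≤ 1 / 2 := hN n
  refine ⟨N, .of_bound (2 * C) (.of_forall fun n => ?_)⟩
  simpa [abs_of_pos hρpos] using wordCount_kstar_mul_le hρpos (hshort 0 N.zero_le) hlong
    (fun n => by simpa [abs_of_pos hρpos] using hC (pow_ne_zero n hρpos.ne')) n

/-- The exponential growth rate of the number of words of length `n` in a language. -/
noncomputable def growthRate (L : Language A) : ℝ :=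
  limsup (fun n : ℕ => Real.log (wordCount L n) / n) atTop

theorem log_wordCount_le [Finite A] (L : Language A) (n : ℕ) :
    Real.log (wordCount L n) ≤ n * Real.log (Nat.card A) := by
  rw [← Real.log_pow]
  rcases Nat.eq_zero_or_pos (wordCount L n) with h | h
  · rw [h, Nat.cast_zero, Real.log_zero]
    exact_mod_cast Real.log_natCast_nonneg (Nat.card A ^ n)
  · exact Real.log_le_log (by exact_mod_cast h) (by exact_mod_cast wordCount_le_pow L n)

theorem isBoundedUnder_log_wordCount_div [Finite A] (L : Language A) :
    IsBoundedUnder (· ≤ ·) atTop fun n : ℕ => Real.log (wordCount L n) / n :=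
  isBoundedUnder_of ⟨Real.log (Nat.card A), fun n => div_le_of_le_mul₀ n.cast_nonneg
    (Real.log_natCast_nonneg _) ((log_wordCount_le L n).trans_eq (mul_comm _ _))⟩

theorem growthRate_mono [Finite A] (h : L ≤ M) : growthRate L ≤ growthRate M := by
  refine limsup_le_limsup (.of_forall fun n => ?_) ?_ (isBoundedUnder_log_wordCount_div M)
  · refine div_le_div_of_nonneg_right ?_ n.cast_nonneg
    rcases Nat.eq_zero_or_pos (wordCount L n) with hL | hL
    · rw [hL, Nat.cast_zero, Real.log_zero]
      exact Real.log_natCast_nonneg _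
    · exact Real.log_le_log (by exact_mod_cast hL)
        (by exact_mod_cast wordCount_mono fun w _ hw => h hw)
  · exact (isBoundedUnder_of ⟨0, fun n => div_nonneg (Real.log_natCast_nonneg _)
      n.cast_nonneg⟩ : IsBoundedUnder (· ≥ ·) atTop _).isCoboundedUnder_le

theorem isBigO_wordCount_of_exp_growthRate_lt [Finite A] {ρ : ℝ}
    (hρ : Real.exp (growthRate L) < ρ) :
    (fun n => (wordCount L n : ℝ)) =O[atTop] (ρ ^ · : ℕ → ℝ) := by
  have hρ₀ : 0 < ρ := (Real.exp_pos _).trans hρ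
  have hlog : growthRate L < Real.log ρ := (Real.lt_log_iff_exp_lt hρ₀).2 hρ
  refine .of_bound 1 ?_
  filter_upwards [eventually_lt_of_limsup_lt hlog (isBoundedUnder_log_wordCount_div L),
    eventually_gt_atTop 0] with n hn hpos
  rw [div_lt_iff₀ (by exact_mod_cast hpos)] at hn
  rw [one_mul, Real.norm_natCast, Real.norm_of_nonneg (by positivity)]
  calc (wordCount L n : ℝ) ≤ Real.exp (Real.log (wordCount L n)) := Real.le_exp_log _
    _ ≤ Real.exp (Real.log ρ * n) := Real.exp_le_exp.2 hn.le
    _ = ρ ^ n := by rw [Real.exp_mul, Real.exp_log hρ₀, Real.rpow_natCast]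

end WordCounting

section TransferMatrix

open Asymptotics Matrix Topology

attribute [local instance] Matrix.linftyOpNormedRing Matrix.linftyOpNormedAddCommGroup

variable {S ι κ : Type*} (δ : S → A → S)

/-- The nonempty words driving the automaton `δ` from `s` to `t` so that every state strictly
between the two ends lies in `R`. -/
def pathLang (R : Set S) (s t : S) : Language A :=
  {w | w ≠ [] ∧ w.foldl δ s = t ∧ ∀ u, u <+: w → u ≠ [] → u ≠ w → u.foldl δ s ∈ R}

/-- The word `w` drives the automaton `δ` from `s` back to `s` through states of `R`. -/
def IsLoop (R : Set S) (s : S) (w : List A) : Prop :=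
  w.foldl δ s = s ∧ ∀ u, u <+: w → u.foldl δ s ∈ R

/-- The words labelling some loop of `δ` in `R`. -/
def loopLang (R : Set S) : Language A := {w | ∃ s, IsLoop δ R s w}

/-- A nonempty word labels at most one loop of `δ` in `R`. -/
def HasUniqueLoops (R : Set S) : Prop :=
  ∀ w s t, w ≠ [] → IsLoop δ R s w → IsLoop δ R t w → s = t

/-- The matrix counting the letters that lead from the states `v i` to the states `v' j`. -/
noncomputable def transferMatrix (v : ι → S) (v' : κ → S) : Matrix ι κ ℂ :=
  of fun i j => ({c | δ (v i) c = v' j}.ncard : ℂ)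

/-- The generating functions of the excursions between states of `V` through `R`. -/
noncomputable def returnMatrix (V : Finset S) (R : Set S) (z : ℂ) : Matrix V V ℂ :=
  of fun i j => ∑' n, (wordCount (pathLang δ R i j) n : ℂ) * z ^ n

variable {δ} {R R' : Set S} {s t : S}

theorem IsLoop.mono (h : R ⊆ R') {w : List A} (hw : IsLoop δ R s w) : IsLoop δ R' s w :=
  ⟨hw.1, fun u hu => h (hw.2 u hu)⟩

theorem HasUniqueLoops.anti (h : R ⊆ R') (hu : HasUniqueLoops δ R') : HasUniqueLoops δ R :=
  fun w s t hw hs ht => hu w s t hw (hs.mono h) (ht.mono h)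

theorem isLoop_iff_mem_pathLang {w : List A} (hw : w ≠ []) :
    IsLoop δ R s w ↔ s ∈ R ∧ w ∈ pathLang δ R s s := by
  refine ⟨fun h => ⟨h.2 [] w.nil_prefix, hw, h.1, fun u hu _ _ => h.2 u hu⟩,
    fun ⟨hs, _, hend, hmid⟩ => ⟨hend, fun u hu => ?_⟩⟩
  rcases eq_or_ne u [] with rfl | hne
  · exact hs
  · rcases eq_or_ne u w with rfl | huw
    · rwa [hend]
    · exact hmid u hu hne huw

theorem cons_mem_pathLang_iff {c : A} {w : List A} (hw : w ≠ []) :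
    c :: w ∈ pathLang δ R s t ↔ δ s c ∈ R ∧ w ∈ pathLang δ R (δ s c) t := by
  constructor
  · rintro ⟨-, hend, hmid⟩
    refine ⟨hmid [c] (by simp) (by simp) (by simpa using hw.symm), hw, hend, fun u hu _ huw => ?_⟩
    exact hmid (c :: u) ((List.prefix_cons_inj c).2 hu) (by simp) (by simpa using huw)
  · rintro ⟨hc, -, hend, hmid⟩
    refine ⟨by simp, hend, fun u hu hne huw => ?_⟩
    obtain ⟨u, rfl, hu'⟩ := (List.prefix_cons_iff.1 hu).resolve_left hne
    rcases eq_or_ne u [] with rfl | hu'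
    · exact hc
    · exact hmid u (by assumption) hu' (by simpa using huw)

theorem wordCount_pathLang_zero : wordCount (pathLang δ R s t) 0 = 0 :=
  wordCount_eq_zero fun _ hlen hw => hw.1 (List.eq_nil_of_length_eq_zero hlen)

theorem wordCount_pathLang_one : wordCount (pathLang δ R s t) 1 = {c | δ s c = t}.ncard := by
  rw [wordCount, ← ncard_image_of_injective _ (List.singleton_injective (α := A))]
  congr 1
  ext w
  constructor
  · rintro ⟨hlen, -, hend, -⟩
    obtain ⟨c, rfl⟩ := List.length_eq_one_iff.1 hlen
    exact ⟨c, hend, rfl⟩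
  · rintro ⟨c, hc, rfl⟩
    refine ⟨rfl, List.cons_ne_nil c [], hc, fun u hu hne huc => ?_⟩
    exact absurd (hu.eq_of_length_le (List.length_pos_iff.2 hne)) huc

open Classical in
theorem wordCount_pathLang_add_two [Fintype A] (n : ℕ) :
    wordCount (pathLang δ R s t) (n + 2) =
      ∑ c, if δ s c ∈ R then wordCount (pathLang δ R (δ s c) t) (n + 1) else 0 := by
  rw [wordCount_succ]
  refine Finset.sum_congr rfl fun c _ => ?_
  have hcons (w : List A) (hw : w.length = n + 1) :=
    cons_mem_pathLang_iff (δ := δ) (R := R) (s := s) (t := t) (c := c)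
      (List.ne_nil_of_length_eq_add_one hw)
  split_ifs with hc
  · exact wordCount_congr fun w hw => (hcons w hw).trans (and_iff_right hc)
  · exact wordCount_eq_zero fun w hw hmem => hc ((hcons w hw).1 hmem).1

open Classical in
theorem sum_transferMatrix_mul [Fintype A] [Fintype κ] (v : ι → S) {v' : κ → S}
    (hv' : Function.Injective v') (f : S → ℂ) (i : ι) :
    ∑ j, transferMatrix δ v v' i j * f (v' j) =
      ∑ c, if δ (v i) c ∈ range v' then f (δ (v i) c) else 0 := by
  have hentry (j : κ) : transferMatrix δ v v' i j * f (v' j) =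
      ∑ c, if δ (v i) c = v' j then f (v' j) else 0 := by
    rw [transferMatrix, of_apply, ncard_eq_toFinset_card', toFinset_ofPred, Finset.card_filter]
    push_cast
    simp only [Finset.sum_mul, ite_mul, one_mul, zero_mul]
  simp only [hentry]
  rw [Finset.sum_comm]
  refine Finset.sum_congr rfl fun c _ => ?_
  split_ifs with h
  · obtain ⟨j, hj⟩ := h
    simp [← hj, hv'.eq_iff]
  · exact Finset.sum_eq_zero fun j _ => if_neg fun hj => h ⟨j, hj.symm⟩

theorem transferMatrix_eq_wordCount (v : ι → S) (v' : κ → S) (R : Set S) (i : ι) (j : κ) :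
    transferMatrix δ v v' i j = wordCount (pathLang δ R (v i) (v' j)) 1 := by
  rw [wordCount_pathLang_one, transferMatrix, of_apply]

theorem transferMatrix_mul_apply [Finite A] {μ : Type*} [Fintype κ] (v : ι → S) {v' : κ → S}
    (hv' : Function.Injective v') (F : Matrix κ μ ℂ) (t : S) (j : μ) (n : ℕ)
    (hF : ∀ k, F k j = wordCount (pathLang δ (range v') (v' k) t) (n + 1)) (i : ι) :
    (transferMatrix δ v v' * F) i j = wordCount (pathLang δ (range v') (v i) t) (n + 2) := by
  classical
  have := Fintype.ofFinite A
  simp only [mul_apply, hF]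
  rw [sum_transferMatrix_mul v hv'
    fun s => (wordCount (pathLang δ (range v') s t) (n + 1) : ℂ), wordCount_pathLang_add_two]
  push_cast
  rfl

theorem transferMatrix_pow_mul_apply [Finite A] [Fintype κ] [DecidableEq κ] {v : κ → S}
    (hv : Function.Injective v) (v' : ι → S) (n : ℕ) (i : κ) (j : ι) :
    (transferMatrix δ v v ^ n * transferMatrix δ v v') i j =
      wordCount (pathLang δ (range v) (v i) (v' j)) (n + 1) := by
  induction n generalizing i with
  | zero => rw [pow_zero, Matrix.one_mul, transferMatrix_eq_wordCount]
  | succ n ih =>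
    rw [pow_succ', Matrix.mul_assoc]
    exact transferMatrix_mul_apply v hv _ _ j n ih i

theorem linfty_opNorm_transferMatrix_le [Finite A] [Fintype ι] [Fintype κ] (v : ι → S) {v' : κ → S}
    (hv' : Function.Injective v') : ‖transferMatrix δ v v'‖ ≤ Nat.card A := by
  refine linfty_opNorm_le_of_row_sum_le (Nat.cast_nonneg _) fun i => ?_
  have hdisj : Pairwise (Function.onFun Disjoint fun j => {c | δ (v i) c = v' j}) :=
    fun j k hjk => disjoint_left.2 fun c hj hk => hjk (hv' (hj.symm.trans hk))
  calc ∑ j, ‖transferMatrix δ v v' i j‖ = (⋃ j, {c | δ (v i) c = v' j}).ncard := by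
        rw [ncard_iUnion_of_finite (fun j => toFinite _) hdisj, finsum_eq_sum_of_fintype]
        simp [transferMatrix]
    _ ≤ Nat.card A := by exact_mod_cast ncard_le_card _

theorem trace_transferMatrix_pow [Finite A] [Fintype κ] [DecidableEq κ] {v : κ → S}
    (hv : Function.Injective v) (huniq : HasUniqueLoops δ (range v)) (n : ℕ) :
    (transferMatrix δ v v ^ (n + 1)).trace = wordCount (loopLang δ (range v)) (n + 1) := by
  let loops (i : κ) : Set (List A) :=
    {w | w.length = n + 1 ∧ w ∈ pathLang δ (range v) (v i) (v i)}
  have hloop {i : κ} {w : List A} (hw : w ∈ loops i) : IsLoop δ (range v) (v i) w :=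
    (isLoop_iff_mem_pathLang hw.2.1).2 ⟨mem_range_self i, hw.2⟩
  have hunion : {w | w.length = n + 1 ∧ w ∈ loopLang δ (range v)} = ⋃ i, loops i := by
    ext w
    rw [mem_iUnion]
    constructor
    · rintro ⟨hlen, s, hs⟩
      obtain ⟨⟨i, rfl⟩, hw⟩ :=
        (isLoop_iff_mem_pathLang (List.ne_nil_of_length_eq_add_one hlen)).1 hs
      exact ⟨i, hlen, hw⟩
    · rintro ⟨i, hw⟩
      exact ⟨hw.1, v i, hloop hw⟩
  have hdisj : Pairwise (Function.onFun Disjoint loops) := fun i j hij =>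
    disjoint_left.2 fun w hi hj => hij (hv (huniq w _ _ hi.2.1 (hloop hi) (hloop hj)))
  rw [wordCount, hunion, ncard_iUnion_of_finite (fun i => finite_words _ _) hdisj,
    finsum_eq_sum_of_fintype, pow_succ, trace, Nat.cast_sum]
  exact Finset.sum_congr rfl fun i _ => transferMatrix_pow_mul_apply hv v n i i

theorem logZeta_wordCount_loopLang [Finite A] [Fintype κ] [DecidableEq κ] {v : κ → S}
    (hv : Function.Injective v) (huniq : HasUniqueLoops δ (range v)) (z : ℂ) :
    logZeta (fun n => wordCount (loopLang δ (range v)) n) z =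
      logZeta (fun n => (transferMatrix δ v v ^ n).trace) z := by
  simp only [logZeta, trace_transferMatrix_pow hv huniq]

theorem tsum_wordCount_pathLang [Finite A] [Fintype κ] [DecidableEq κ] (v : ι → S) {u : κ → S}
    (hu : Function.Injective u) {z : ℂ} (hz : ‖z‖ * Nat.card A < 1) (i j : ι) :
    ∑' n, (wordCount (pathLang δ (range u) (v i) (v j)) n : ℂ) * z ^ n =
      (z • transferMatrix δ v v + z ^ 2 • (transferMatrix δ v u *
        (1 - z • transferMatrix δ u u)⁻¹ * transferMatrix δ u v)) i j := by
  have hnorm : ‖z • transferMatrix δ u u‖ < 1 :=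
    norm_smul_lt_one (lt_of_le_of_lt (by gcongr; exact linfty_opNorm_transferMatrix_le u hu) hz)
  have hcount (n : ℕ) : (transferMatrix δ v u * transferMatrix δ u u ^ n *
      transferMatrix δ u v) i j = wordCount (pathLang δ (range u) (v i) (v j)) (n + 2) := by
    rw [Matrix.mul_assoc]
    exact transferMatrix_mul_apply v hu _ _ j n (transferMatrix_pow_mul_apply hu v n · j) i
  let a (n : ℕ) : ℂ := wordCount (pathLang δ (range u) (v i) (v j)) n * z ^ n
  have htail : HasSum (fun n => a (n + 2)) (z ^ 2 * (transferMatrix δ v u *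
      (1 - z • transferMatrix δ u u)⁻¹ * transferMatrix δ u v) i j) :=
    ((hasSum_mul_pow_mul _ _ _ hnorm i j).mul_left (z ^ 2)).congr_fun fun n => by
      rw [hcount]; ring
  have hhead : ∑ n ∈ Finset.range 2, a n = z * transferMatrix δ v v i j := by
    rw [Finset.sum_range_succ, Finset.sum_range_one]
    simp only [a, wordCount_pathLang_zero, ← transferMatrix_eq_wordCount v v]
    ring
  refine ((hasSum_nat_add_iff 2).1 htail).tsum_eq.trans ?_
  rw [hhead, add_comm]
  rfl

theorem exp_logZeta_loopLang_union_mul_det_of_finite [Finite A] [DecidableEq S] {V W : Finset S}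
    (hVW : Disjoint V W) (huniq : HasUniqueLoops δ (V ∪ W : Set S)) {z : ℂ}
    (hz : ‖z‖ * Nat.card A < 1) :
    Complex.exp (logZeta (fun n => wordCount (loopLang δ (V ∪ W : Set S)) n) z) *
        (1 - returnMatrix δ V W z).det =
      Complex.exp (logZeta (fun n => wordCount (loopLang δ W) n) z) := by
  let v : V → S := (↑)
  let u : W → S := (↑)
  have hu : Function.Injective u := Subtype.val_injective
  have hvu : Function.Injective (Sum.elim v u) :=
    Subtype.val_injective.sumElim hu fun i j => Finset.disjoint_iff_ne.1 hVW i i.2 j j.2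
  have hru : range u = W := Subtype.range_coe
  have hrvu : range (Sum.elim v u) = (V ∪ W : Set S) :=
    (Sum.elim_range v u).trans (congrArg₂ _ Subtype.range_coe hru)
  have hblocks : transferMatrix δ (Sum.elim v u) (Sum.elim v u) =
      fromBlocks (transferMatrix δ v v) (transferMatrix δ v u)
        (transferMatrix δ u v) (transferMatrix δ u u) := by
    ext (i | i) (j | j) <;> rfl
  have hnorm {κ : Type _} [Fintype κ] {v : κ → S} (hv : Function.Injective v) :
      ‖z‖ * ‖transferMatrix δ v v‖ < 1 :=
    lt_of_le_of_lt (by gcongr; exact linfty_opNorm_transferMatrix_le v hv) hz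
  have hschur := exp_logZeta_trace_fromBlocks_mul_det _ _ _ _ (hblocks ▸ hnorm hvu) (hnorm hu)
  rw [← hblocks] at hschur
  have hreturn : returnMatrix δ V W z = z • transferMatrix δ v v + z ^ 2 • (transferMatrix δ v u *
      (1 - z • transferMatrix δ u u)⁻¹ * transferMatrix δ u v) := by
    ext i j
    rw [← tsum_wordCount_pathLang v hu hz, hru]
    rfl
  rw [hreturn, ← hrvu, logZeta_wordCount_loopLang hvu (hrvu ▸ huniq), hschur, ← hru,
    logZeta_wordCount_loopLang hu (hru ▸ huniq.anti subset_union_right)]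

variable (δ) in
theorem eventually_forall_prefix_mem (s : S) (w : List A) :
    ∀ᶠ F : Finset S in atTop, ∀ u, u <+: w → u.foldl δ s ∈ F := by
  classical
  filter_upwards [eventually_ge_atTop (w.inits.map (List.foldl δ s)).toFinset] with F hF u hu
  exact hF (List.mem_toFinset.2 (List.mem_map_of_mem ((List.mem_inits u w).2 hu)))

theorem eventually_mem_pathLang_iff (R : Set S) (s t : S) (w : List A) :
    ∀ᶠ F : Finset S in atTop, (w ∈ pathLang δ (R ∩ F) s t ↔ w ∈ pathLang δ R s t) := by
  filter_upwards [eventually_forall_prefix_mem δ s w] with F hF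
  exact and_congr_right fun _ => and_congr_right fun _ =>
    forall₄_congr fun u hu _ _ => and_iff_left (hF u hu)

theorem eventually_mem_loopLang_iff (R : Set S) (w : List A) :
    ∀ᶠ F : Finset S in atTop, (w ∈ loopLang δ (R ∩ F) ↔ w ∈ loopLang δ R) := by
  by_cases hw : w ∈ loopLang δ R
  · obtain ⟨s, hs, hmem⟩ := hw
    filter_upwards [eventually_forall_prefix_mem δ s w] with F hF
    exact iff_of_true ⟨s, hs, fun u hu => ⟨hmem u hu, hF u hu⟩⟩ ⟨s, hs, hmem⟩
  · exact .of_forall fun F => iff_of_false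
      (fun ⟨s, hs⟩ => hw ⟨s, hs.mono inter_subset_left⟩) hw

theorem tendsto_logZeta_wordCount [Finite A] {α : Type*} {l : Filter α} {F : α → Language A}
    {L : Language A} (h : ∀ w, ∀ᶠ s in l, (w ∈ F s ↔ w ∈ L)) {z : ℂ}
    (hz : ‖z‖ * Nat.card A < 1) :
    Tendsto (fun s => logZeta (fun n => wordCount (F s) n) z) l
      (𝓝 (logZeta (fun n => wordCount L n) z)) := by
  refine tendsto_logZeta (C := 1) (Nat.cast_nonneg _) (fun n => ?_) (fun s n => ?_) hz
  · exact tendsto_const_nhds.congr' <| (eventually_wordCount_eq h (n + 1)).mono fun s hs => by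
      simp only [hs]
  · simpa using mod_cast wordCount_le_pow (F s) n

theorem tendsto_tsum_wordCount [Finite A] {α : Type*} {l : Filter α} {F : α → Language A}
    {L : Language A} (h : ∀ w, ∀ᶠ s in l, (w ∈ F s ↔ w ∈ L)) {z : ℂ}
    (hz : ‖z‖ * Nat.card A < 1) :
    Tendsto (fun s => ∑' n, (wordCount (F s) n : ℂ) * z ^ n) l
      (𝓝 (∑' n, (wordCount L n : ℂ) * z ^ n)) := by
  refine tendsto_tsum_of_dominated_convergence (bound := fun n => (‖z‖ * Nat.card A) ^ n)
    (summable_geometric_of_lt_one (by positivity) hz) (fun n => ?_) (.of_forall fun s n => ?_)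
  · exact tendsto_const_nhds.congr' <| (eventually_wordCount_eq h n).mono fun s hs => by
      simp only [hs]
  · rw [norm_mul, norm_pow, Complex.norm_natCast, mul_pow, mul_comm]
    gcongr
    exact_mod_cast wordCount_le_pow (F s) n

theorem exp_logZeta_loopLang_union_mul_det [Finite A] [DecidableEq S] {V : Finset S} {H : Set S}
    (hVH : Disjoint (V : Set S) H) (huniq : HasUniqueLoops δ (V ∪ H : Set S)) {z : ℂ}
    (hz : ‖z‖ * Nat.card A < 1) :
    Complex.exp (logZeta (fun n => wordCount (loopLang δ (V ∪ H : Set S)) n) z) *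
        (1 - returnMatrix δ V H z).det =
      Complex.exp (logZeta (fun n => wordCount (loopLang δ H) n) z) := by
  classical
  let W (F : Finset S) : Finset S := F.filter (· ∈ H)
  have hW (F : Finset S) : (W F : Set S) = H ∩ F := by ext s; simp [W, and_comm]
  have hWH (F : Finset S) : (W F : Set S) ⊆ H := (hW F).trans_subset inter_subset_left
  have hunion (w : List A) : ∀ᶠ F : Finset S in atTop,
      (w ∈ loopLang δ (V ∪ W F : Set S) ↔ w ∈ loopLang δ (V ∪ H : Set S)) := by
    filter_upwards [eventually_mem_loopLang_iff (V ∪ H : Set S) w, eventually_ge_atTop V]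
      with F hF hVF
    have hinter : (V ∪ W F : Set S) = (V ∪ H : Set S) ∩ F := by
      rw [hW, union_inter_distrib_right, inter_eq_left.2 (Finset.coe_subset.2 hVF)]
    rwa [hinter]
  have hhigh (w : List A) : ∀ᶠ F : Finset S in atTop,
      (w ∈ loopLang δ (W F : Set S) ↔ w ∈ loopLang δ H) := by
    simpa only [hW] using eventually_mem_loopLang_iff H w
  have hreturn : Tendsto (fun F => returnMatrix δ V (W F) z) atTop (𝓝 (returnMatrix δ V H z)) := by
    refine tendsto_pi_nhds.2 fun i => tendsto_pi_nhds.2 fun j => tendsto_tsum_wordCount ?_ hz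
    simpa only [hW] using eventually_mem_pathLang_iff H (i : S) (j : S)
  have hdet : Continuous fun M : Matrix V V ℂ => (1 - M).det :=
    (continuous_const.sub continuous_id).matrix_det
  exact tendsto_nhds_unique_of_eventuallyEq
    (((Complex.continuous_exp.tendsto _).comp (tendsto_logZeta_wordCount hunion hz)).mul
      ((hdet.tendsto _).comp hreturn))
    ((Complex.continuous_exp.tendsto _).comp (tendsto_logZeta_wordCount hhigh hz))
    (.of_forall fun F => exp_logZeta_loopLang_union_mul_det_of_finite
      (Finset.disjoint_coe.1 (hVH.mono_right (hWH F)))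
      (huniq.anti (union_subset_union_right _ (hWH F))) hz)

theorem exp_logZeta_loopLang_sdiff_mul_det [Finite A] [DecidableEq S] {V : Finset S} {H : Set S}
    (hVH : Disjoint (V : Set S) H) (huniq : HasUniqueLoops δ (V ∪ H : Set S)) {z : ℂ}
    (hz : ‖z‖ * Nat.card A < 1) :
    Complex.exp (logZeta (fun n => wordCount (loopLang δ (V ∪ H : Set S) \ loopLang δ H) n) z) *
      (1 - returnMatrix δ V H z).det = 1 := by
  have hsub : loopLang δ H ≤ loopLang δ (V ∪ H : Set S) :=
    fun w ⟨s, hs⟩ => ⟨s, hs.mono subset_union_right⟩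
  have hunion := exp_logZeta_loopLang_union_mul_det hVH huniq hz
  rw [← logZeta_wordCount_sdiff_add hsub hz, Complex.exp_add, mul_right_comm] at hunion
  exact mul_right_cancel₀ (Complex.exp_ne_zero _) (hunion.trans (one_mul _).symm)

end TransferMatrix

section FollowerSets

variable {X : Set (ℤ → A)}

theorem translate_mem (hX : shift '' X = X) {x : ℤ → A} (hx : x ∈ X) (k : ℤ) :
    (fun j => x (j + k)) ∈ X := by
  induction k using Int.induction_on with
  | zero => simpa using hx
  | succ k ih =>
    rw [← hX]
    exact ⟨_, ih, funext fun j => congrArg x (by ring)⟩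
  | pred k ih =>
    rw [← hX] at ih
    obtain ⟨y, hy, hyx⟩ := ih
    convert hy using 1
    funext j
    simpa [shift, sub_eq_add_neg, add_comm, add_left_comm] using (congrFun hyx (j - 1)).symm

theorem mem_fol_append_singleton {u : List A} {c : A} {y : ℕ → A} :
    y ∈ fol X (u ++ [c]) ↔ y 0 = c ∧ ∃ y' ∈ fol X u, ∀ k, y' (k + 1) = y k := by
  constructor
  · rintro ⟨x, hx, hxu, hxy⟩
    refine ⟨?_, fun k => x (u.length - 1 + k), ⟨x, hx, fun i => ?_, fun k => rfl⟩, fun k => ?_⟩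
    · simpa [hxy 0] using hxu ⟨u.length, by simp⟩
    · simpa [List.getElem_append_left] using hxu ⟨i, by simp⟩
    · simp [hxy k]
  · rintro ⟨h0, y', ⟨x, hx, hxu, hxy⟩, hy⟩
    refine ⟨x, hx, fun ⟨i, hi⟩ => ?_, fun k => ?_⟩
    · rcases Nat.lt_or_eq_of_le (Nat.le_of_lt_succ (by simpa using hi)) with hlt | rfl
      · simpa [List.getElem_append_left hlt] using hxu ⟨i, hlt⟩
      · simpa [hxy, ← h0] using hy 0
    · simp [← hy k, hxy]

theorem fol_append_congr {u v : List A} (h : fol X u = fol X v) (w : List A) :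
    fol X (u ++ w) = fol X (v ++ w) := by
  induction w using List.reverseRecOn with
  | nil => simpa using h
  | append_singleton w c ih =>
    ext y
    rw [← List.append_assoc, ← List.append_assoc, mem_fol_append_singleton,
      mem_fol_append_singleton, ih]

theorem nonempty_fol_of_append {u w : List A} (h : (fol X (u ++ w)).Nonempty) :
    (fol X u).Nonempty := by
  induction w using List.reverseRecOn with
  | nil => simpa using h
  | append_singleton w c ih =>
    obtain ⟨y, hy⟩ := h
    rw [← List.append_assoc, mem_fol_append_singleton] at hy
    obtain ⟨-, y', hy', -⟩ := hy
    exact ih ⟨y', hy'⟩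

theorem fol_cons_subset (hX : shift '' X = X) (a : A) (w : List A) :
    fol X (a :: w) ⊆ fol X w := by
  rintro y ⟨x, hx, hxw, hxy⟩
  refine ⟨_, translate_mem hX hx 1, fun ⟨i, hi⟩ => ?_, fun k => ?_⟩
  · simpa using hxw ⟨i + 1, by simpa using hi⟩
  · rw [hxy k]
    congr 1
    push_cast [List.length_cons]
    ring

theorem fol_subset_of_suffix (hX : shift '' X = X) {u w : List A} (h : u <:+ w) :
    fol X w ⊆ fol X u := by
  obtain ⟨t, rfl⟩ := h
  induction t with
  | nil => exact subset_rfl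
  | cons a t ih => exact (fol_cons_subset hX a _).trans ih

theorem IsLeftConstraint.of_append (hX : shift '' X = X) {u v : List A}
    (h : IsLeftConstraint X (u ++ v)) (hu : u ≠ []) : IsLeftConstraint X u := by
  refine ⟨hu, (nonempty_fol_of_append (nonempty_iff_ne_empty.2 h.2.1)).ne_empty,
    (fol_subset_of_suffix hX (List.tail_suffix u)).ssubset_of_ne fun heq => h.2.2.ne ?_⟩
  rw [List.tail_append_of_ne_nil hu]
  exact fol_append_congr heq v

end FollowerSets

section MinimalWords

variable {X : Set (ℤ → A)}

/-- A word is minimal if deleting its first letter enlarges its follower set. The nonempty minimal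
words with nonempty follower set are the left constraints; the empty word counts as minimal. -/
def IsMinimalWord (X : Set (ℤ → A)) (s : List A) : Prop :=
  s ≠ [] → fol X s ≠ fol X s.tail

open Classical in
/-- The shortest suffix of a word that has the same follower set. -/
noncomputable def minSuffix (X : Set (ℤ → A)) : List A → List A
  | [] => []
  | a :: w => if fol X (a :: w) = fol X w then minSuffix X w else a :: w

theorem minSuffix_suffix (w : List A) : minSuffix X w <:+ w := by
  induction w with
  | nil => exact List.suffix_rfl
  | cons a w ih =>
    rw [minSuffix]
    split_ifs
    · exact ih.trans (List.suffix_cons a w)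
    · exact List.suffix_rfl

theorem length_minSuffix_le (w : List A) : (minSuffix X w).length ≤ w.length :=
  (minSuffix_suffix w).length_le

theorem fol_minSuffix (w : List A) : fol X (minSuffix X w) = fol X w := by
  induction w with
  | nil => rfl
  | cons a w ih =>
    rw [minSuffix]
    split_ifs with h
    · rw [ih, h]
    · rfl

theorem isMinimalWord_minSuffix (w : List A) : IsMinimalWord X (minSuffix X w) := by
  induction w with
  | nil => exact fun h => absurd rfl h
  | cons a w ih =>
    rw [minSuffix]
    split_ifs with h
    · exact ih
    · exact fun _ => h

theorem minSuffix_eq_of_suffix (hX : shift '' X = X) {s w : List A} (hs : IsMinimalWord X s)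
    (hsw : s <:+ w) (hfol : fol X w = fol X s) : minSuffix X w = s := by
  induction w with
  | nil => exact (List.suffix_nil.1 hsw).symm
  | cons a w ih =>
    rw [minSuffix]
    rcases List.suffix_cons_iff.1 hsw with rfl | hsw'
    · exact if_neg (hs (List.cons_ne_nil a w))
    · have heq : fol X (a :: w) = fol X w :=
        (fol_cons_subset hX a w).antisymm
          ((fol_subset_of_suffix hX hsw').trans hfol.symm.subset)
      rw [if_pos heq]
      exact ih hsw' (heq.symm.trans hfol)

theorem IsMinimalWord.minSuffix_eq (hX : shift '' X = X) {s : List A} (hs : IsMinimalWord X s) :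
    minSuffix X s = s :=
  minSuffix_eq_of_suffix hX hs List.suffix_rfl rfl

theorem minSuffix_eq_of_length_le (hX : shift '' X = X) {u w : List A} (huw : u <:+ w)
    (hlen : (minSuffix X w).length ≤ u.length) : minSuffix X u = minSuffix X w := by
  have hsuf : minSuffix X w <:+ u := List.suffix_of_suffix_length_le (minSuffix_suffix w) huw hlen
  refine minSuffix_eq_of_suffix hX (isMinimalWord_minSuffix w) hsuf
    ((fol_subset_of_suffix hX hsuf).antisymm ?_)
  rw [fol_minSuffix]
  exact fol_subset_of_suffix hX huw

theorem length_minSuffix_le_of_suffix (hX : shift '' X = X) {u w : List A} (huw : u <:+ w) :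
    (minSuffix X u).length ≤ (minSuffix X w).length := by
  by_contra! hlt
  exact hlt.ne' (congrArg List.length
    (minSuffix_eq_of_length_le hX huw (hlt.le.trans (length_minSuffix_le u))))

theorem minSuffix_minSuffix_append (hX : shift '' X = X) (u v : List A) :
    minSuffix X (minSuffix X u ++ v) = minSuffix X (u ++ v) := by
  refine (minSuffix_eq_of_suffix hX (isMinimalWord_minSuffix _) ?_ ?_).symm
  · obtain ⟨t, ht⟩ := minSuffix_suffix (X := X) u
    exact (minSuffix_suffix _).trans ⟨t, by rw [← List.append_assoc, ht]⟩
  · rw [fol_minSuffix]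
    exact fol_append_congr (fol_minSuffix u).symm v

theorem IsMinimalWord.isLeftConstraint (hX : shift '' X = X) {s : List A}
    (hs : IsMinimalWord X s) (hne : s ≠ []) (hfol : (fol X s).Nonempty) : IsLeftConstraint X s :=
  ⟨hne, hfol.ne_empty,
    (fol_subset_of_suffix hX (List.tail_suffix s)).ssubset_of_ne (hs hne)⟩

/-- The transition map of the automaton on minimal words: read one more letter and forget the part
of the past that does not influence the future. -/
noncomputable def followerStep (X : Set (ℤ → A)) (s : List A) (c : A) : List A :=
  minSuffix X (s ++ [c])

theorem foldl_followerStep (hX : shift '' X = X) {s : List A} (hs : IsMinimalWord X s)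
    (w : List A) : w.foldl (followerStep X) s = minSuffix X (s ++ w) := by
  induction w using List.reverseRecOn with
  | nil => simp [hs.minSuffix_eq hX]
  | append_singleton w c ih =>
    rw [List.foldl_append, ih, List.foldl_cons, List.foldl_nil, followerStep,
      minSuffix_minSuffix_append hX, List.append_assoc]

/-- The states of the automaton: minimal words with nonempty follower set. -/
def stateSet (X : Set (ℤ → A)) : Set (List A) :=
  {s | IsMinimalWord X s ∧ (fol X s).Nonempty}

/-- The states that remember more than `N` letters of the past. -/
def highStates (X : Set (ℤ → A)) (N : ℕ) : Set (List A) :=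
  {s ∈ stateSet X | N < s.length}

theorem minSuffix_mem_stateSet {w : List A} (h : (fol X w).Nonempty) :
    minSuffix X w ∈ stateSet X :=
  ⟨isMinimalWord_minSuffix w, by rwa [fol_minSuffix]⟩

theorem isLeftConstraint_of_mem_highStates (hX : shift '' X = X) {N : ℕ} {s : List A}
    (hs : s ∈ highStates X N) : IsLeftConstraint X s :=
  hs.1.1.isLeftConstraint hX (List.ne_nil_of_length_pos (Nat.zero_lt_of_lt hs.2)) hs.1.2

end MinimalWords

section PeriodicPoints

variable {X : Set (ℤ → A)}

/-- The word `x (i - m + 1) … x i` of the `m` letters of `x` up to position `i`. -/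
def pastWord (x : ℤ → A) (i : ℤ) : ℕ → List A
  | 0 => []
  | m + 1 => x (i - m) :: pastWord x i m

@[simp]
theorem length_pastWord (x : ℤ → A) (i : ℤ) (m : ℕ) : (pastWord x i m).length = m := by
  induction m with
  | zero => rfl
  | succ m ih => simp [pastWord, ih]

theorem pastWord_add (x : ℤ → A) (i : ℤ) (m k : ℕ) :
    pastWord x i (m + k) = pastWord x (i - k) m ++ pastWord x i k := by
  induction m with
  | zero => simp [pastWord]
  | succ m ih =>
    rw [Nat.add_right_comm, pastWord, ih, pastWord, List.cons_append]
    congr 2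
    push_cast
    ring

theorem getElem_pastWord (x : ℤ → A) (i : ℤ) (m j : ℕ) (hj : j < (pastWord x i m).length) :
    (pastWord x i m)[j] = x (i - m + 1 + j) := by
  induction m generalizing j with
  | zero => simp at hj
  | succ m ih =>
    cases j with
    | zero => exact congrArg x (by push_cast; ring)
    | succ j =>
      simp only [pastWord, List.getElem_cons_succ, ih]
      congr 1
      push_cast
      ring

theorem pastWord_eq_pastWord_iff {x y : ℤ → A} {i j : ℤ} {m : ℕ} :
    pastWord x i m = pastWord y j m ↔ ∀ k < m, x (i - k) = y (j - k) := by
  induction m with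
  | zero => simp [pastWord]
  | succ m ih => rw [pastWord, pastWord, List.cons.injEq, ih, Nat.forall_lt_succ_right, and_comm]

theorem pastWord_suffix (x : ℤ → A) (i : ℤ) {m k : ℕ} (h : k ≤ m) :
    pastWord x i k <:+ pastWord x i m := by
  obtain ⟨d, rfl⟩ := Nat.exists_eq_add_of_le' h
  rw [pastWord_add]
  exact List.suffix_append _ _

theorem eq_pastWord_of_suffix {x : ℤ → A} {i : ℤ} {m : ℕ} {s : List A} (h : s <:+ pastWord x i m) :
    s = pastWord x i s.length :=
  have hlen : s.length ≤ m := by simpa using h.length_le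
  (List.suffix_of_suffix_length_le h (pastWord_suffix x i hlen) (by simp)).eq_of_length (by simp)

theorem nonempty_fol_pastWord (hX : shift '' X = X) {x : ℤ → A} (hx : x ∈ X) (i : ℤ) (m : ℕ) :
    (fol X (pastWord x i m)).Nonempty := by
  refine ⟨_, _, translate_mem hX hx (i - m + 1), fun ⟨j, hj⟩ => ?_, fun k => rfl⟩
  rw [List.get_eq_getElem, getElem_pastWord, add_comm]

theorem mem_of_nonempty_fol_pastWord [TopologicalSpace A] (hX : IsSubshift X) {x : ℤ → A}
    (h : ∀ k : ℕ, ∃ (i : ℤ) (m : ℕ), k ≤ i ∧ i - m + 1 ≤ -k ∧ (fol X (pastWord x i m)).Nonempty) :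
    x ∈ X := by
  rw [← hX.1.closure_eq, mem_closure_iff]
  intro U hU hxU
  obtain ⟨I, u, hu, hsub⟩ := isOpen_pi_iff.1 hU x hxU
  obtain ⟨i, m, hi, hm, -, y, hy, hyx, -⟩ := h (I.sup Int.natAbs)
  refine ⟨_, hsub fun j hj => ?_, translate_mem hX.2 hy (-(i - m + 1))⟩
  have hj' : j.natAbs ≤ I.sup Int.natAbs := Finset.le_sup (f := Int.natAbs) hj
  obtain ⟨k, hk⟩ := Int.eq_ofNat_of_zero_le (show 0 ≤ j - (i - m + 1) by omega)
  have hyj := hyx ⟨k, by rw [length_pastWord]; omega⟩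
  rw [List.get_eq_getElem, getElem_pastWord] at hyj
  have hxj : y (j + -(i - m + 1)) = x j := by
    rw [← sub_eq_add_neg, hk, hyj, ← hk]
    exact congrArg x (by ring)
  simpa only [hxj] using (hu j hj).2

theorem iterate_shift_eq_self_iff {x : ℤ → A} {n : ℕ} :
    shift^[n] x = x ↔ Function.Periodic x (n : ℤ) := by
  have hiter : ∀ y : ℤ → A, shift^[n] y = fun j => y (j + n) := by
    induction n with
    | zero => simp
    | succ n ih =>
      intro y
      rw [Function.iterate_succ_apply, ih]
      funext j
      exact congrArg y (by push_cast; ring)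
  rw [hiter]
  exact funext_iff

theorem pastWord_add_mul_period {x : ℤ → A} {n : ℕ} (hx : Function.Periodic x (n : ℤ))
    (i k : ℤ) (m : ℕ) : pastWord x (i + k * n) m = pastWord x i m := by
  refine pastWord_eq_pastWord_iff.2 fun j _ => ?_
  rw [add_sub_right_comm]
  exact hx.int_mul k (i - j)

theorem eq_of_pastWord_eq {x y : ℤ → A} {n : ℕ} (hn : 0 < n) (hx : Function.Periodic x (n : ℤ))
    (hy : Function.Periodic y (n : ℤ)) (h : pastWord x 0 n = pastWord y 0 n) : x = y := by
  funext j
  have hn' : (0 : ℤ) < n := by exact_mod_cast hn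
  obtain ⟨k, hk⟩ := Int.eq_ofNat_of_zero_le (Int.emod_nonneg (-j) hn'.ne')
  have hj : j = 0 - k + -(-j / n) * n := by linarith [Int.emod_add_mul_ediv (-j) n]
  rw [hj]
  have hxy := pastWord_eq_pastWord_iff.1 h k (by have := Int.emod_lt_of_pos (-j) hn'; omega)
  exact (hx.int_mul _ _).trans (hxy.trans (hy.int_mul _ _).symm)

theorem exists_periodic_pastWord_eq {w : List A} (hw : w ≠ []) :
    ∃ x : ℤ → A, Function.Periodic x (w.length : ℤ) ∧ pastWord x 0 w.length = w := by
  have hn : (0 : ℤ) < w.length := by exact_mod_cast List.length_pos_iff.2 hw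
  have hlt : ∀ i : ℤ, ((i - 1) % w.length).toNat < w.length := fun i => by
    have := Int.emod_nonneg (i - 1) hn.ne'
    have := Int.emod_lt_of_pos (i - 1) hn
    omega
  refine ⟨fun i => w[((i - 1) % w.length).toNat]'(hlt i), fun i => ?_, ?_⟩
  · simp only [add_sub_right_comm, Int.add_emod_right]
  · refine List.ext_getElem (by simp) fun j h₁ h₂ => ?_
    rw [getElem_pastWord]
    congr 1
    rw [show 0 - (w.length : ℤ) + 1 + j - 1 = j + (-1) * w.length by ring,
      Int.add_mul_emod_self_right, Int.emod_eq_of_lt (by omega) (by omega), Int.toNat_natCast]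

theorem pastWord_sub_isRotated {x : ℤ → A} {n : ℕ} (hx : Function.Periodic x (n : ℤ)) (i : ℤ)
    (d : ℕ) : pastWord x (i - d) n ~r pastWord x i n := by
  have hone : ∀ j, pastWord x (j - 1) n ~r pastWord x j n := fun j => by
    cases n with
    | zero => exact List.IsRotated.refl _
    | succ m =>
      rw [pastWord_add x j m 1]
      have hstep : x (j - 1 - m) = x j := by
        rw [← hx (j - 1 - m)]
        exact congrArg x (by push_cast; ring)
      simp only [pastWord, hstep, Nat.cast_one, Nat.cast_zero, sub_zero]
      exact List.isRotated_append (l := [x j])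
  induction d with
  | zero => simp [List.IsRotated.refl]
  | succ d ih =>
    rw [Nat.cast_succ, ← sub_sub]
    exact (hone _).trans ih

end PeriodicPoints

section LoopsAndPeriodicPoints

variable {X : Set (ℤ → A)}

/-- The words `w` whose periodic repetition `…www…`, with a copy of `w` ending at position `0`,
lies in `Y`. They encode the points of `Y` fixed by a power of the shift. -/
def perLang (Y : Set (ℤ → A)) : Language A :=
  {w | ∃ x ∈ Y, Function.Periodic x (w.length : ℤ) ∧ pastWord x 0 w.length = w}

theorem pastWord_mem_perLang_iff {Y : Set (ℤ → A)} {x : ℤ → A} {n : ℕ} (hn : 0 < n)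
    (hx : Function.Periodic x (n : ℤ)) : pastWord x 0 n ∈ perLang Y ↔ x ∈ Y := by
  constructor
  · rintro ⟨y, hy, hper, hyx⟩
    rw [length_pastWord] at hper hyx
    rwa [eq_of_pastWord_eq hn hx hper hyx.symm]
  · exact fun hxY => ⟨x, hxY, by simpa using hx, by simp⟩

theorem perCount_eq_wordCount (Y : Set (ℤ → A)) {n : ℕ} (hn : 0 < n) :
    perCount Y n = wordCount (perLang Y) n := by
  refine Set.ncard_congr (fun x _ => pastWord x 0 n) (fun x hx => ?_) (fun x y hx hy hxy => ?_)
    fun w ⟨hw, x, hxY, hper, hxw⟩ => ?_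
  · exact ⟨length_pastWord x 0 n,
      (pastWord_mem_perLang_iff hn (iterate_shift_eq_self_iff.1 hx.2)).2 hx.1⟩
  · exact eq_of_pastWord_eq hn (iterate_shift_eq_self_iff.1 hx.2)
      (iterate_shift_eq_self_iff.1 hy.2) hxy
  · subst hw
    exact ⟨x, ⟨hxY, iterate_shift_eq_self_iff.2 hper⟩, hxw⟩

/-- The points of `X` at every position of which the future depends on more than `N` letters of
the past. -/
def deepPart (X : Set (ℤ → A)) (N : ℕ) : Set (ℤ → A) :=
  {x ∈ X | ∀ i, ∃ m, N < (minSuffix X (pastWord x i m)).length}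

theorem exists_pastWord_neg_eq {x : ℤ → A} {n : ℕ} (hn : 0 < n)
    (hx : Function.Periodic x (n : ℤ)) (i : ℤ) :
    ∃ d < n, ∀ m, pastWord x (-(d : ℤ)) m = pastWord x i m := by
  have hn' : (0 : ℤ) < n := by exact_mod_cast hn
  obtain ⟨d, hd⟩ := Int.eq_ofNat_of_zero_le (Int.emod_nonneg (-i) hn'.ne')
  refine ⟨d, by have := Int.emod_lt_of_pos (-i) hn'; omega, fun m => ?_⟩
  rw [← pastWord_add_mul_period hx i (-i / n)]
  congr 1
  linarith [Int.emod_add_mul_ediv (-i) n]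

-- Running the loop `m` times from `s` leads back to `s`; once these `m` periods are longer than
-- `s`, they determine the state on their own.
theorem minSuffix_pastWord_mul (hX : shift '' X = X) {x : ℤ → A} {n : ℕ}
    (hx : Function.Periodic x (n : ℤ)) {s : List A} (hs : IsMinimalWord X s)
    (hloop : (pastWord x 0 n).foldl (followerStep X) s = s) {m : ℕ} (hm : s.length ≤ m * n) :
    minSuffix X (pastWord x 0 (m * n)) = s := by
  rw [foldl_followerStep hX hs] at hloop
  have hrepeat : ∀ k : ℕ, minSuffix X (s ++ pastWord x 0 (k * n)) = s := fun k => by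
    induction k with
    | zero => simpa [pastWord] using hs.minSuffix_eq hX
    | succ k ih =>
      have hshift : pastWord x (0 - n) (k * n) = pastWord x 0 (k * n) := by
        simpa using pastWord_add_mul_period hx 0 (-1) (k * n)
      rw [Nat.succ_mul, pastWord_add, hshift, ← List.append_assoc,
        ← minSuffix_minSuffix_append hX, ih, hloop]
  rw [minSuffix_eq_of_length_le hX (List.suffix_append s _) (by simpa [hrepeat] using hm), hrepeat]

theorem foldl_eq_minSuffix_pastWord (hX : shift '' X = X) {x : ℤ → A} {n : ℕ}
    (hx : Function.Periodic x (n : ℤ)) {s u v : List A} (hs : IsMinimalWord X s)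
    (hloop : (pastWord x 0 n).foldl (followerStep X) s = s)
    (huv : u ++ v = pastWord x 0 n) {m : ℕ} (hm : s.length ≤ m * n) :
    u.foldl (followerStep X) s =
      minSuffix X (pastWord x (-(v.length : ℤ)) (m * n + u.length)) := by
  have hlen : u.length + v.length = n := by simpa using congrArg List.length huv
  have hu : pastWord x (-(v.length : ℤ)) u.length = u := by
    have hsplit := pastWord_add x 0 u.length v.length
    rw [hlen, ← huv, zero_sub] at hsplit
    exact (List.append_inj_left hsplit (by simp)).symm
  have hshift : pastWord x (-(v.length : ℤ) - u.length) (m * n) = pastWord x 0 (m * n) := by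
    rw [← pastWord_add_mul_period hx 0 (-1), ← hlen]
    congr 1
    push_cast
    ring
  rw [pastWord_add, hu, hshift, ← minSuffix_minSuffix_append hX,
    minSuffix_pastWord_mul hX hx hs hloop hm, foldl_followerStep hX hs]

theorem mem_of_isLoop [TopologicalSpace A] (hX : IsSubshift X) {x : ℤ → A} {n : ℕ} (hn : 0 < n)
    (hx : Function.Periodic x (n : ℤ)) {s : List A}
    (hloop : IsLoop (followerStep X) (stateSet X) s (pastWord x 0 n)) : x ∈ X := by
  have hs : s ∈ stateSet X := hloop.2 [] List.nil_prefix
  refine mem_of_nonempty_fol_pastWord hX fun k =>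
    ⟨k * n, (2 * k + 1 + s.length) * n, by nlinarith, by push_cast; nlinarith, ?_⟩
  have hshift := pastWord_add_mul_period hx 0 k ((2 * k + 1 + s.length) * n)
  rw [zero_add] at hshift
  rw [hshift, ← fol_minSuffix, minSuffix_pastWord_mul hX.2 hx hs.1 hloop.1 (by nlinarith)]
  exact hs.2

theorem hasUniqueLoops_followerStep (hX : shift '' X = X) :
    HasUniqueLoops (followerStep X) (stateSet X) := by
  intro w s t hw hs ht
  obtain ⟨x, hx, hxw⟩ := exists_periodic_pastWord_eq hw
  have hpos := List.length_pos_iff.2 hw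
  have hpast : ∀ r, IsLoop (followerStep X) (stateSet X) r w →
      ∀ m, r.length ≤ m * w.length → minSuffix X (pastWord x 0 (m * w.length)) = r := by
    intro r hr m hm
    exact minSuffix_pastWord_mul hX hx (hr.2 [] List.nil_prefix).1 (by rw [hxw]; exact hr.1) hm
  exact (hpast s hs (s.length + t.length) (by nlinarith)).symm.trans
    (hpast t ht (s.length + t.length) (by nlinarith))

theorem isLoop_highStates_iff (hX : shift '' X = X) {N : ℕ} {x : ℤ → A} {n : ℕ} (hn : 0 < n)
    (hx : Function.Periodic x (n : ℤ)) {s : List A}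
    (hloop : IsLoop (followerStep X) (stateSet X) s (pastWord x 0 n)) :
    IsLoop (followerStep X) (highStates X N) s (pastWord x 0 n) ↔
      ∀ i, ∃ m, N < (minSuffix X (pastWord x i m)).length := by
  have hs : IsMinimalWord X s := (hloop.2 [] List.nil_prefix).1
  constructor
  · intro hhigh i
    obtain ⟨d, hd, hdi⟩ := exists_pastWord_neg_eq hn hx i
    have hsplit := pastWord_add x 0 (n - d) d
    rw [Nat.sub_add_cancel hd.le] at hsplit
    have hstate := foldl_eq_minSuffix_pastWord hX hx hs hloop.1 hsplit.symm
      (m := s.length) (by nlinarith)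
    have hlt := (hhigh.2 _ (hsplit ▸ List.prefix_append _ _)).2
    rw [hstate, length_pastWord, hdi] at hlt
    exact ⟨_, hlt⟩
  · refine fun hdeep => ⟨hloop.1, fun u hu => ⟨hloop.2 u hu, ?_⟩⟩
    obtain ⟨v, hv⟩ := hu
    obtain ⟨m, hm⟩ := hdeep (-(v.length : ℤ))
    rw [foldl_eq_minSuffix_pastWord hX hx hs hloop.1 hv (m := s.length + m) (by nlinarith)]
    exact hm.trans_le (length_minSuffix_le_of_suffix hX (pastWord_suffix x _ (by nlinarith)))

-- If the future at time `i` depends on at most `N` letters of the past, then the minimal suffixes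
-- of all longer pasts are the same, so the state reached after one period is the initial one.
theorem exists_isLoop_of_notMem_deepPart (hX : shift '' X = X) {N : ℕ} {x : ℤ → A} {n : ℕ}
    (hn : 0 < n) (hx : Function.Periodic x (n : ℤ)) (hxX : x ∈ X) (hdeep : x ∉ deepPart X N) :
    ∃ s, IsLoop (followerStep X) (stateSet X) s (pastWord x 0 n) := by
  have hshallow : ∃ i, ∀ m, (minSuffix X (pastWord x i m)).length ≤ N := by
    simpa [deepPart, hxX] using hdeep
  obtain ⟨i, hi⟩ := hshallow
  obtain ⟨d, -, hd⟩ := exists_pastWord_neg_eq hn hx i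
  have hstable : ∀ k, minSuffix X (pastWord x 0 (N + k + d)) =
      minSuffix X (pastWord x 0 (N + d)) := fun k => by
    have hpast : minSuffix X (pastWord x i (N + k)) = minSuffix X (pastWord x i N) :=
      (minSuffix_eq_of_length_le hX (pastWord_suffix x i (Nat.le_add_right N k))
        (by simpa using hi (N + k))).symm
    rw [pastWord_add x 0 (N + k), pastWord_add x 0 N, zero_sub, hd, hd,
      ← minSuffix_minSuffix_append hX, hpast, minSuffix_minSuffix_append hX]
  have hreturn : minSuffix X (minSuffix X (pastWord x 0 (N + d)) ++ pastWord x 0 n) =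
      minSuffix X (pastWord x 0 (N + d)) := by
    have hshift : pastWord x (0 - n) (N + d) = pastWord x 0 (N + d) := by
      simpa using pastWord_add_mul_period hx 0 (-1) (N + d)
    rw [minSuffix_minSuffix_append hX, ← hshift, ← pastWord_add, add_right_comm, hstable, hshift]
  refine ⟨minSuffix X (pastWord x 0 (N + d)), ?_, fun u ⟨v, hv⟩ => ?_⟩
  · rw [foldl_followerStep hX (isMinimalWord_minSuffix _), hreturn]
  · rw [foldl_followerStep hX (isMinimalWord_minSuffix _)]
    refine minSuffix_mem_stateSet (nonempty_fol_of_append (w := v) ?_)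
    rw [List.append_assoc, hv, ← fol_minSuffix, hreturn, fol_minSuffix]
    exact nonempty_fol_pastWord hX hxX 0 _

theorem mem_loopLang_sdiff_iff [TopologicalSpace A] (hX : IsSubshift X) (N : ℕ) {w : List A}
    (hw : w ≠ []) :
    w ∈ loopLang (followerStep X) (stateSet X) \ loopLang (followerStep X) (highStates X N) ↔
      w ∈ perLang X \ perLang (deepPart X N) := by
  obtain ⟨x, hx, hxw⟩ := exists_periodic_pastWord_eq hw
  have hn := List.length_pos_iff.2 hw
  rw [← hxw]
  generalize w.length = n at hn hx
  rw [show pastWord x 0 n ∈ perLang X \ perLang (deepPart X N) ↔ x ∈ X ∧ x ∉ deepPart X N from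
    and_congr (pastWord_mem_perLang_iff hn hx) (pastWord_mem_perLang_iff hn hx).not]
  constructor
  · rintro ⟨⟨s, hs⟩, hhigh⟩
    exact ⟨mem_of_isLoop hX hn hx hs,
      fun hdeep => hhigh ⟨s, (isLoop_highStates_iff hX.2 hn hx hs).2 hdeep.2⟩⟩
  · rintro ⟨hxX, hdeep⟩
    refine ⟨exists_isLoop_of_notMem_deepPart hX.2 hn hx hxX hdeep, fun ⟨s, hs⟩ => hdeep ⟨hxX, ?_⟩⟩
    have hs' : IsLoop (followerStep X) (stateSet X) s (pastWord x 0 n) :=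
      ⟨hs.1, fun u hu => (hs.2 u hu).1⟩
    exact (isLoop_highStates_iff hX.2 hn hx hs').1 hs

end LoopsAndPeriodicPoints

section Tilings

open Asymptotics Computability

variable {X : Set (ℤ → A)}

theorem mem_kstar_mul_of_append {L M : Language A} (hnil : [] ∈ M)
    (hpre : ∀ u v, u ++ v ∈ L → u ∈ M) {u v : List A} (h : u ++ v ∈ L∗) : u ∈ L∗ * M := by
  obtain ⟨l, hl, hlL⟩ := Language.mem_kstar.1 h
  clear h
  induction l generalizing u with
  | nil =>
    obtain ⟨rfl, -⟩ := List.append_eq_nil_iff.1 hl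
    exact Language.append_mem_mul (Language.nil_mem_kstar _) hnil
  | cons t l ih =>
    rw [List.flatten_cons, List.append_eq_append_iff] at hl
    have ht : t ∈ L := hlL t List.mem_cons_self
    rcases hl with ⟨r, rfl, -⟩ | ⟨r, rfl, hr⟩
    · exact Language.append_mem_mul (Language.nil_mem_kstar _) (hpre u r ht)
    · obtain ⟨p, hp, q, hq, rfl⟩ := ih hr.symm fun y hy => hlL y (List.mem_cons_of_mem t hy)
      beta_reduce
      rw [← List.append_assoc]
      exact Language.append_mem_mul
        (mul_kstar_le_kstar (a := L) (Language.append_mem_mul ht hp)) hq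

theorem wordCount_le_mul_of_isRotated [Finite A] {L T : Language A} {n : ℕ} (hn : 0 < n)
    (h : ∀ w ∈ L, w.length = n → ∃ w' ∈ T, w' ~r w) :
    wordCount L n ≤ n * wordCount T n := by
  have hsub : {w | w.length = n ∧ w ∈ L} ⊆
      ⋃ k ∈ Finset.range n, (List.rotate · k) '' {w | w.length = n ∧ w ∈ T} := by
    rintro w ⟨hlen, hw⟩
    obtain ⟨w', hw', k, rfl⟩ := h w hw hlen
    rw [List.length_rotate] at hlen
    refine mem_iUnion₂.2 ⟨k % n, Finset.mem_range.2 (Nat.mod_lt k hn), w', ⟨hlen, hw'⟩, ?_⟩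
    rw [← hlen]
    exact List.rotate_mod w' k
  have hfin (k : ℕ) : ((List.rotate · k) '' {w | w.length = n ∧ w ∈ T}).Finite :=
    (finite_words T n).image _
  calc wordCount L n
      ≤ (⋃ k ∈ Finset.range n, (List.rotate · k) '' {w | w.length = n ∧ w ∈ T}).ncard :=
        ncard_le_ncard hsub ((Finset.finite_toSet _).biUnion fun k _ => hfin k)
    _ ≤ ∑ k ∈ Finset.range n, ((List.rotate · k) '' {w | w.length = n ∧ w ∈ T}).ncard :=
        Finset.set_ncard_biUnion_le _ _
    _ ≤ ∑ _k ∈ Finset.range n, wordCount T n :=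
        Finset.sum_le_sum fun k _ => ncard_image_le (finite_words T n)
    _ = n * wordCount T n := by simp

theorem wordCount_le_sum_of_append [Finite A] {L T : Language A} {N : ℕ}
    (h : ∀ w ∈ L, ∃ s : List A, s.length ≤ N ∧ s ++ w ∈ T) (n : ℕ) :
    wordCount L n ≤ ∑ p ∈ Finset.range (N + 1), wordCount T (p + n) := by
  have hsub : {w | w.length = n ∧ w ∈ L} ⊆
      ⋃ p ∈ Finset.range (N + 1), List.drop p '' {w | w.length = p + n ∧ w ∈ T} := by
    rintro w ⟨hlen, hw⟩
    obtain ⟨s, hs, hsw⟩ := h w hw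
    exact mem_iUnion₂.2 ⟨s.length, Finset.mem_range_succ_iff.2 hs, s ++ w,
      ⟨by rw [List.length_append, hlen], hsw⟩, List.drop_left⟩
  have hfin (p : ℕ) : (List.drop p '' {w | w.length = p + n ∧ w ∈ T}).Finite :=
    (finite_words T _).image _
  calc wordCount L n
      ≤ (⋃ p ∈ Finset.range (N + 1), List.drop p '' {w | w.length = p + n ∧ w ∈ T}).ncard :=
        ncard_le_ncard hsub ((Finset.finite_toSet _).biUnion fun p _ => hfin p)
    _ ≤ ∑ p ∈ Finset.range (N + 1), (List.drop p '' {w | w.length = p + n ∧ w ∈ T}).ncard :=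
        Finset.set_ncard_biUnion_le _ _
    _ ≤ ∑ p ∈ Finset.range (N + 1), wordCount T (p + n) :=
        Finset.sum_le_sum fun p _ => ncard_image_le (finite_words T _)

/-- The left constraints of all lengths. -/
def leftConstraints (X : Set (ℤ → A)) : Language A := {w | IsLeftConstraint X w}

/-- The words allowed at the end of a tiling: left constraints, whose nonempty prefixes are left
constraints too, the empty word, and single letters. -/
def tailWords (X : Set (ℤ → A)) : Language A := {w | w.length ≤ 1 ∨ IsLeftConstraint X w}

/-- The words tiled by left constraints longer than `N`, up to a tail. -/
def tiledWords (X : Set (ℤ → A)) (N : ℕ) : Language A :=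
  (longWords (leftConstraints X) N)∗ * tailWords X

theorem mem_tiledWords_of_append (hX : shift '' X = X) {N : ℕ} {u v : List A}
    (h : u ++ v ∈ (longWords (leftConstraints X) N)∗) : u ∈ tiledWords X N := by
  refine mem_kstar_mul_of_append (Or.inl (Nat.zero_le 1)) (fun u v huv => ?_) h
  rcases eq_or_ne u [] with rfl | hu
  · exact Or.inl (Nat.zero_le 1)
  · exact Or.inr (IsLeftConstraint.of_append hX huv.1 hu)

theorem mem_longWords_of_mem_highStates (hX : shift '' X = X) {N : ℕ} {s : List A}
    (hs : s ∈ highStates X N) : s ∈ longWords (leftConstraints X) N :=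
  ⟨isLeftConstraint_of_mem_highStates hX hs, hs.2⟩

theorem exists_pastWord_mem_kstar (hX : shift '' X = X) {N : ℕ} {x : ℤ → A}
    (hx : x ∈ deepPart X N) (n : ℕ) :
    ∃ m, n ≤ m ∧ pastWord x 0 m ∈ (longWords (leftConstraints X) N)∗ := by
  induction n with
  | zero => exact ⟨0, le_rfl, Language.nil_mem_kstar _⟩
  | succ n ih =>
    obtain ⟨m, hnm, hm⟩ := ih
    obtain ⟨l, hl⟩ := hx.2 (0 - m)
    have htile := mem_longWords_of_mem_highStates hX
      ⟨minSuffix_mem_stateSet (nonempty_fol_pastWord hX hx.1 (0 - m) l), hl⟩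
    rw [eq_pastWord_of_suffix (minSuffix_suffix _)] at htile
    refine ⟨(minSuffix X (pastWord x (0 - m) l)).length + m, by omega, ?_⟩
    rw [pastWord_add]
    exact mul_kstar_le_kstar (a := longWords _ N) (Language.append_mem_mul htile hm)

theorem exists_isRotated_mem_tiledWords (hX : shift '' X = X) {N : ℕ} {w : List A}
    (hw : w ∈ perLang (deepPart X N)) : ∃ w' ∈ tiledWords X N, w' ~r w := by
  obtain ⟨x, hx, hper, hxw⟩ := hw
  obtain ⟨m, hm, hmem⟩ := exists_pastWord_mem_kstar hX hx w.length
  obtain ⟨d, rfl⟩ := Nat.exists_eq_add_of_le hm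
  rw [pastWord_add] at hmem
  refine ⟨_, mem_tiledWords_of_append hX hmem, ?_⟩
  conv_rhs => rw [← hxw]
  exact pastWord_sub_isRotated hper 0 d

-- The state reached at the end is a long left constraint. Either it starts inside `a`, and is the
-- only tile, or it can be cut off and the rest of `w` is tiled by induction.
theorem exists_suffix_append_mem_kstar (hX : shift '' X = X) {N : ℕ} {a w : List A}
    (h : ∀ u, u <+: w → u ≠ [] → minSuffix X (a ++ u) ∈ highStates X N) :
    ∃ s, s <:+ a ∧ s ++ w ∈ (longWords (leftConstraints X) N)∗ := by
  induction hn : w.length using Nat.strong_induction_on generalizing w with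
  | _ n ih =>
    rcases eq_or_ne w [] with rfl | hw
    · exact ⟨[], List.nil_suffix, Language.nil_mem_kstar _⟩
    have htile := mem_longWords_of_mem_highStates hX (h w List.prefix_rfl hw)
    have hsuf := minSuffix_suffix (X := X) (a ++ w)
    generalize minSuffix X (a ++ w) = t at htile hsuf
    have hpos : 0 < t.length := Nat.zero_lt_of_lt htile.2
    rcases le_total t.length w.length with hle | hle
    · obtain ⟨v, rfl⟩ := List.suffix_of_suffix_length_le hsuf (List.suffix_append a w) hle
      obtain ⟨s, hsa, hs⟩ := ih v.length (by rw [← hn, List.length_append]; omega)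
        (fun u hu => h u (hu.trans (List.prefix_append v t))) rfl
      refine ⟨s, hsa, ?_⟩
      rw [← List.append_assoc]
      exact kstar_mul_le_kstar (a := longWords _ N) (Language.append_mem_mul hs htile)
    · obtain ⟨s, rfl⟩ := List.suffix_of_suffix_length_le (List.suffix_append a w) hsuf hle
      exact ⟨s, (List.suffix_append_inj_of_length_eq rfl).1 hsuf |>.1,
        le_kstar (a := longWords _ N) htile⟩

theorem exists_append_mem_tiledWords (hX : shift '' X = X) {N : ℕ} {a b w : List A}
    (ha : IsMinimalWord X a) (hw : w ∈ pathLang (followerStep X) (highStates X N) a b) :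
    ∃ s, s.length ≤ a.length ∧ s ++ w ∈ tiledWords X N := by
  obtain ⟨hne, -, hmid⟩ := hw
  obtain ⟨w, c, rfl⟩ := (List.eq_nil_or_concat' w).resolve_left hne
  obtain ⟨s, hsa, hs⟩ := exists_suffix_append_mem_kstar hX (N := N) (a := a) (w := w)
    fun u hu hu₀ => by
      rw [← foldl_followerStep hX ha]
      refine hmid u (hu.trans (List.prefix_append w [c])) hu₀ ?_
      rintro rfl
      simpa using hu.length_le
  refine ⟨s, hsa.length_le, ?_⟩
  rw [← List.append_assoc]
  exact Language.append_mem_mul hs (Or.inl le_rfl)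

theorem growthRate_leftConstraints (X : Set (ℤ → A)) : growthRate (leftConstraints X) = hC X :=
  congrArg (limsup · atTop) (funext fun _ =>
    congrArg (· / _) (max_eq_right (Real.log_natCast_nonneg _)).symm)

theorem exists_isBigO_wordCount_tiledWords [Finite A] {ρ : ℝ} (hρ : Real.exp (hC X) < ρ) :
    ∃ N, (fun n => (wordCount (tiledWords X N) n : ℝ)) =O[atTop] (ρ ^ · : ℕ → ℝ) := by
  rw [← growthRate_leftConstraints] at hρ
  obtain ⟨ρ₀, hρ₀, hlt⟩ := exists_between hρ
  refine exists_isBigO_wordCount_kstar_mul ((Real.exp_pos _).trans hρ₀) hlt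
    (isBigO_wordCount_of_exp_growthRate_lt hρ₀) ?_
  refine (isBigO_wordCount_of_exp_growthRate_lt hρ).congr' ?_ .rfl
  filter_upwards [eventually_ge_atTop 2] with n hn
  refine congrArg Nat.cast (wordCount_congr fun w hw => ⟨Or.inr, Or.rec (fun h => ?_) id⟩)
  omega

theorem isBigO_wordCount_perLang_deepPart [Finite A] (hX : shift '' X = X) {N : ℕ} {ρ₀ ρ : ℝ}
    (hρ₀ : 0 ≤ ρ₀) (hρ : ρ₀ < ρ)
    (h : (fun n => (wordCount (tiledWords X N) n : ℝ)) =O[atTop] (ρ₀ ^ · : ℕ → ℝ)) :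
    (fun n => (wordCount (perLang (deepPart X N)) n : ℂ)) =O[atTop] (ρ ^ · : ℕ → ℝ) := by
  have hrot : (fun n => (wordCount (perLang (deepPart X N)) n : ℂ)) =O[atTop]
      fun n => (n : ℝ) * (wordCount (tiledWords X N) n : ℝ) := by
    refine .of_bound 1 ?_
    filter_upwards [eventually_gt_atTop 0] with n hn
    simpa using mod_cast wordCount_le_mul_of_isRotated hn fun w hw _ =>
      exists_isRotated_mem_tiledWords hX hw
  refine hrot.trans (((isBigO_refl _ _).mul h).trans ?_)
  simpa using (isLittleO_pow_const_mul_const_pow_const_pow_of_norm_lt 1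
    (by rwa [Real.norm_of_nonneg hρ₀])).isBigO

theorem isBigO_wordCount_pathLang [Finite A] (hX : shift '' X = X) {N : ℕ} {ρ : ℝ}
    (h : (fun n => (wordCount (tiledWords X N) n : ℝ)) =O[atTop] (ρ ^ · : ℕ → ℝ))
    {a : List A} (ha : IsMinimalWord X a) (b : List A) :
    (fun n => (wordCount (pathLang (followerStep X) (highStates X N) a b) n : ℂ)) =O[atTop]
      (ρ ^ · : ℕ → ℝ) := by
  have hsum : (fun n => ∑ p ∈ Finset.range (a.length + 1),
      (wordCount (tiledWords X N) (p + n) : ℝ)) =O[atTop] (ρ ^ · : ℕ → ℝ) := by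
    refine .fun_sum fun p _ => ?_
    have hshift : (fun n => (wordCount (tiledWords X N) (p + n) : ℝ)) =O[atTop]
        fun n => ρ ^ (p + n) :=
      h.comp_tendsto (tendsto_atTop_mono (fun n => Nat.le_add_left n p) tendsto_id)
    simp only [pow_add] at hshift
    exact hshift.trans (isBigO_const_mul_self _ _ _)
  refine (isBigO_of_le _ fun n => ?_).trans hsum
  rw [Complex.norm_natCast]
  refine le_trans ?_ (le_abs_self _)
  exact_mod_cast wordCount_le_sum_of_append (fun w hw => exists_append_mem_tiledWords hX ha hw) n

end Tilings

section ZetaFunction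

open Asymptotics Topology

variable {X : Set (ℤ → A)}

/-- The logarithm of the Artin–Mazur zeta function of `X`. -/
noncomputable def logArtinMazur (X : Set (ℤ → A)) : ℂ → ℂ :=
  logZeta fun n => perCount X n

/-- The states that remember at most `N` letters of the past. -/
noncomputable def lowStates [Finite A] (X : Set (ℤ → A)) (N : ℕ) : Finset (List A) :=
  ((List.finite_length_le A N).subset fun s (hs : s ∈ stateSet X ∧ s.length ≤ N) =>
    hs.2).toFinset

theorem mem_lowStates [Finite A] {N : ℕ} {s : List A} :
    s ∈ lowStates X N ↔ s ∈ stateSet X ∧ s.length ≤ N :=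
  Finite.mem_toFinset _

theorem lowStates_union_highStates [Finite A] (X : Set (ℤ → A)) (N : ℕ) :
    (lowStates X N ∪ highStates X N : Set (List A)) = stateSet X := by
  ext s
  rw [mem_union, Finset.mem_coe, mem_lowStates]
  exact and_or_left.symm.trans (and_iff_left (le_or_gt _ _))

theorem disjoint_lowStates_highStates [Finite A] (X : Set (ℤ → A)) (N : ℕ) :
    Disjoint (lowStates X N : Set (List A)) (highStates X N) :=
  disjoint_left.2 fun _ hlow hhigh => (mem_lowStates.1 hlow).2.not_gt hhigh.2

open Classical in
theorem exp_logZeta_perLang_sdiff_mul_det [Finite A] [TopologicalSpace A] (hX : IsSubshift X)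
    (N : ℕ) {z : ℂ} (hz : ‖z‖ * Nat.card A < 1) :
    Complex.exp (logZeta (fun n => wordCount (perLang X \ perLang (deepPart X N)) n) z) *
      (1 - returnMatrix (followerStep X) (lowStates X N) (highStates X N) z).det = 1 := by
  have hdet := exp_logZeta_loopLang_sdiff_mul_det (disjoint_lowStates_highStates X N)
    (by rw [lowStates_union_highStates]; exact hasUniqueLoops_followerStep hX.2) hz
  rw [lowStates_union_highStates] at hdet
  have hcount (n : ℕ) : wordCount (perLang X \ perLang (deepPart X N)) (n + 1) =
      wordCount (loopLang (followerStep X) (stateSet X) \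
        loopLang (followerStep X) (highStates X N)) (n + 1) :=
    wordCount_congr fun w hw =>
      (mem_loopLang_sdiff_iff hX N (List.ne_nil_of_length_eq_add_one hw)).symm
  simp only [logZeta, hcount] at hdet ⊢
  exact hdet

theorem logArtinMazur_eq_add [Finite A] (X : Set (ℤ → A)) (N : ℕ) {z : ℂ}
    (hz : ‖z‖ * Nat.card A < 1) :
    logArtinMazur X z =
      logZeta (fun n => wordCount (perLang X \ perLang (deepPart X N)) n) z +
        logZeta (fun n => wordCount (perLang (deepPart X N)) n) z := by
  have hdeep : perLang (deepPart X N) ≤ perLang X := fun w ⟨x, hx, hw⟩ => ⟨x, hx.1, hw⟩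
  rw [logZeta_wordCount_sdiff_add hdeep hz]
  exact tsum_congr fun n => by beta_reduce; rw [perCount_eq_wordCount X n.succ_pos]

theorem eventually_norm_mul_lt_one (c : ℝ) : ∀ᶠ z : ℂ in 𝓝 0, ‖z‖ * c < 1 :=
  (by fun_prop : Continuous fun z : ℂ => ‖z‖ * c).continuousAt.eventually_lt_const (by simp)

open Classical in
theorem exists_meromorphicOn_ball_eventuallyEq [Finite A] [TopologicalSpace A] (hX : IsSubshift X)
    {r : ℝ} (hr : r ∈ Ioo 0 (Real.exp (-hC X))) :
    ∃ g : ℂ → ℂ, MeromorphicOn g (Metric.ball 0 r) ∧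
      g =ᶠ[𝓝[≠] 0] fun z => Complex.exp (logArtinMazur X z) := by
  have hρ : Real.exp (hC X) < r⁻¹ := by
    rw [lt_inv_comm₀ (Real.exp_pos _) hr.1, ← Real.exp_neg]
    exact hr.2
  obtain ⟨ρ₀, hρ₀, hlt⟩ := exists_between hρ
  have hρ₀pos := (Real.exp_pos _).trans hρ₀
  obtain ⟨N, hN⟩ := exists_isBigO_wordCount_tiledWords hρ₀
  have hdeep := differentiableOn_logZeta (inv_pos.2 hr.1)
    (isBigO_wordCount_perLang_deepPart hX.2 hρ₀pos.le hlt hN)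
  have hdet : DifferentiableOn ℂ (fun z =>
      (1 - returnMatrix (followerStep X) (lowStates X N) (highStates X N) z).det)
      (Metric.ball 0 r) := by
    refine differentiableOn_det fun i j => .const_sub ?_ _
    refine (differentiableOn_tsum_mul_pow hρ₀pos (isBigO_wordCount_pathLang hX.2 hN
      (mem_lowStates.1 i.2).1.1 j)).mono (Metric.ball_subset_ball ?_)
    exact (le_inv_comm₀ hr.1 hρ₀pos).2 hlt.le
  rw [inv_inv] at hdeep
  refine ⟨_, (hdeep.cexp.analyticOnNhd Metric.isOpen_ball).meromorphicOn.mul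
    (hdet.analyticOnNhd Metric.isOpen_ball).meromorphicOn.inv, ?_⟩
  filter_upwards [(eventually_norm_mul_lt_one (Nat.card A)).filter_mono nhdsWithin_le_nhds]
    with z hz
  rw [logArtinMazur_eq_add X N hz, Complex.exp_add,
    eq_inv_of_mul_eq_one_left (exp_logZeta_perLang_sdiff_mul_det hX N hz), mul_comm]
  rfl

theorem mem_rev_iff {x : ℤ → A} : x ∈ rev X ↔ (fun n => x (-n)) ∈ X := by
  constructor
  · rintro ⟨y, hy, rfl⟩
    simpa using hy
  · exact fun h => ⟨_, h, by simp⟩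

theorem IsSubshift.rev [TopologicalSpace A] (hX : IsSubshift X) : IsSubshift (rev X) := by
  refine ⟨?_, Subset.antisymm ?_ fun x hx => ⟨fun n => x (n - 1), ?_, by simp [funext_iff, shift]⟩⟩
  · rw [show QFTPaper.rev X = (fun (x : ℤ → A) n => x (-n)) ⁻¹' X from Set.ext fun _ => mem_rev_iff]
    exact hX.1.preimage (by fun_prop)
  · rintro _ ⟨x, hx, rfl⟩
    rw [mem_rev_iff] at hx ⊢
    simpa [shift, ← sub_eq_add_neg, neg_add_eq_sub] using translate_mem hX.2 hx (-1)
  · rw [mem_rev_iff] at hx ⊢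
    simpa [sub_eq_neg_add, neg_add] using translate_mem hX.2 hx 1

theorem perCount_rev (X : Set (ℤ → A)) (n : ℕ) : perCount (rev X) n = perCount X n := by
  have hper {x : ℤ → A} (hx : Function.Periodic x (n : ℤ)) :
      Function.Periodic (fun k => x (-k)) (n : ℤ) := fun k => by
    simpa [sub_eq_neg_add, neg_add_rev] using hx.sub_eq (-k)
  refine Set.ncard_congr (fun x _ k => x (-k)) (fun x ⟨hx, hxn⟩ => ?_) (fun x y _ _ hxy => ?_)
    fun x ⟨hx, hxn⟩ => ⟨fun k => x (-k), ⟨⟨x, hx, rfl⟩, ?_⟩, by simp⟩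
  · exact ⟨mem_rev_iff.1 hx, iterate_shift_eq_self_iff.2 (hper (iterate_shift_eq_self_iff.1 hxn))⟩
  · exact funext fun k => by simpa using congrFun hxy (-k)
  · exact iterate_shift_eq_self_iff.2 (hper (iterate_shift_eq_self_iff.1 hxn))

theorem exists_meromorphicOn_ball_hSC_eventuallyEq [Finite A] [TopologicalSpace A]
    (hX : IsSubshift X) {r : ℝ} (hr : r ∈ Ioo 0 (Real.exp (-hSC X))) :
    ∃ g : ℂ → ℂ, MeromorphicOn g (Metric.ball 0 r) ∧
      g =ᶠ[𝓝[≠] 0] fun z => Complex.exp (logArtinMazur X z) := by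
  rcases min_choice (hC X) (hC (rev X)) with h | h <;> rw [hSC, h] at hr
  · exact exists_meromorphicOn_ball_eventuallyEq hX hr
  · have hrev : logArtinMazur (rev X) = logArtinMazur X := by
      simp only [logArtinMazur, perCount_rev]
    exact hrev ▸ exists_meromorphicOn_ball_eventuallyEq hX.rev hr

/-- The words occurring in elements of `X`. -/
def factorWords (X : Set (ℤ → A)) : Language A := {w | ∃ x ∈ X, OccursAt w x 0}

theorem growthRate_factorWords (X : Set (ℤ → A)) : growthRate (factorWords X) = hTop X :=
  rfl

theorem leftConstraints_le_factorWords (X : Set (ℤ → A)) : leftConstraints X ≤ factorWords X := by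
  intro w hw
  obtain ⟨_, x, hx, hxw, -⟩ := nonempty_iff_ne_empty.2 hw.2.1
  exact ⟨x, hx, fun i => by simpa using hxw i⟩

theorem hSC_le_hTop [Finite A] (X : Set (ℤ → A)) : hSC X ≤ hTop X := by
  refine (min_le_left _ _).trans ?_
  rw [← growthRate_leftConstraints, ← growthRate_factorWords]
  exact growthRate_mono (leftConstraints_le_factorWords X)

theorem perLang_le_factorWords (hX : shift '' X = X) : perLang X ≤ factorWords X := by
  rintro w ⟨x, hx, -, hxw⟩
  rw [← hxw]
  refine ⟨_, translate_mem hX hx (0 - w.length + 1), fun ⟨j, hj⟩ => ?_⟩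
  rw [List.get_eq_getElem, getElem_pastWord]
  congr 1
  ring

theorem isBigO_perCount [Finite A] (hX : shift '' X = X) {ρ : ℝ} (hρ : Real.exp (hTop X) < ρ) :
    (fun n => (perCount X n : ℂ)) =O[atTop] (ρ ^ · : ℕ → ℝ) := by
  rw [← growthRate_factorWords] at hρ
  refine .trans (.of_bound 1 ?_) (isBigO_wordCount_of_exp_growthRate_lt hρ)
  filter_upwards [eventually_gt_atTop 0] with n hn
  rw [perCount_eq_wordCount X hn]
  simpa using mod_cast wordCount_mono fun w _ hw => perLang_le_factorWords hX hw

theorem exists_isBigO_perCount [Finite A] (hX : shift '' X = X) {z : ℂ}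
    (hz : z ∈ Metric.ball 0 (Real.exp (-hTop X))) :
    ∃ ρ : ℝ, 0 ≤ ρ ∧ (fun n => (perCount X n : ℂ)) =O[atTop] (ρ ^ · : ℕ → ℝ) ∧ ‖z‖ * ρ < 1 := by
  rw [mem_ball_zero_iff, Real.exp_neg, ← one_div, lt_div_iff₀' (Real.exp_pos _)] at hz
  obtain ⟨ρ, hρ, hzρ⟩ := exists_lt_and_mul_lt_one hz
  exact ⟨ρ, ((Real.exp_pos _).trans hρ).le, isBigO_perCount hX hρ, by rwa [mul_comm]⟩

theorem summable_logArtinMazur [Finite A] (hX : shift '' X = X) {z : ℂ}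
    (hz : z ∈ Metric.ball 0 (Real.exp (-hTop X))) :
    Summable fun n : ℕ => (perCount X (n + 1) : ℂ) / (n + 1) * z ^ (n + 1) := by
  obtain ⟨ρ, hρ, hcount, hzρ⟩ := exists_isBigO_perCount hX hz
  have hsum := summable_logZeta hρ hcount hzρ
  exact hsum

theorem differentiableOn_logArtinMazur [Finite A] (hX : shift '' X = X) :
    DifferentiableOn ℂ (logArtinMazur X) (Metric.ball 0 (Real.exp (-hTop X))) := fun z hz => by
  obtain ⟨ρ, hρ, hcount, hzρ⟩ := exists_isBigO_perCount hX hz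
  exact (hasDerivAt_logZeta hρ hcount hzρ).differentiableAt.differentiableWithinAt

theorem qft_zeta_meromorphic_general [Finite A] [TopologicalSpace A] (hX : IsSubshift X) :
    (∀ z ∈ Metric.ball (0 : ℂ) (Real.exp (-hTop X)),
      Summable fun n : ℕ => (perCount X (n + 1) : ℂ) / (n + 1) * z ^ (n + 1)) ∧
    DifferentiableOn ℂ (fun z => Complex.exp (logArtinMazur X z))
      (Metric.ball 0 (Real.exp (-hTop X))) ∧
    ∃ g : ℂ → ℂ, MeromorphicOn g (Metric.ball 0 (Real.exp (-hSC X))) ∧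
      EqOn g (fun z => Complex.exp (logArtinMazur X z))
        (Metric.ball 0 (Real.exp (-hTop X))) :=
  have hhol := (differentiableOn_logArtinMazur hX.2).cexp
  ⟨fun _ hz => summable_logArtinMazur hX.2 hz, hhol,
    exists_meromorphicOn_ball_eqOn (Real.exp_pos _)
      (Real.exp_le_exp.2 (neg_le_neg (hSC_le_hTop X))) hhol
      fun _ hr => exists_meromorphicOn_ball_hSC_eventuallyEq hX hr⟩

end ZetaFunction

/-- For a subshift of quasi-finite type, the Artin–Mazur zeta
function `ζ(z) = exp (∑_{n≥1} (zⁿ/n) #Fix(σⁿ))` is holomorphic on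
`|z| < exp (−h_top X)` and extends to a meromorphic function on
`|z| < exp (−h_𝒮𝒞 X)`. -/
theorem qft_zeta_meromorphic
    {A : Type*} [Fintype A] [TopologicalSpace A] [DiscreteTopology A]
    (X : Set (ℤ → A)) (h : IsQFT X) :
    (∀ z ∈ Metric.ball (0 : ℂ) (Real.exp (-hTop X)),
      Summable fun n : ℕ =>
        (perCount X (n + 1) : ℂ) / (n + 1) * z ^ (n + 1)) ∧
    DifferentiableOn ℂ
      (fun z : ℂ => Complex.exp
        (∑' n : ℕ, (perCount X (n + 1) : ℂ) / (n + 1) * z ^ (n + 1)))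
      (Metric.ball (0 : ℂ) (Real.exp (-hTop X))) ∧
    ∃ g : ℂ → ℂ,
      MeromorphicOn g (Metric.ball (0 : ℂ) (Real.exp (-hSC X))) ∧
      Set.EqOn g
        (fun z : ℂ => Complex.exp
          (∑' n : ℕ, (perCount X (n + 1) : ℂ) / (n + 1) * z ^ (n + 1)))
        (Metric.ball (0 : ℂ) (Real.exp (-hTop X))) :=
  qft_zeta_meromorphic_general h.1

end QFTPaper
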